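/- Let α,β > −1/2. There exist constants c⁽¹⁾ > 0 and C > 0 depending only on α and β such that for every positive integer L and every θ with c⁽¹⁾/L ≤ θ ≤ π/2, setting L̃ := L + (α+β+2)/2, |v_L^{(α,β)}(1,cos θ) − (2^{−(α+β+1)}/Γ(α+1)) L̃^{α+1/2} m_{α+1,β}(θ) cos ω_{α+1}(L̃θ)| ≤ C (2^{−(α+β+1)}/Γ(α+1)) L̃^{α+1/2} m_{α+1,β}(θ) (sin θ)^{−1} L^{−1}. -/

import Mathlib

open MeasureTheory Real
open scoped ENNReal NNReal

/-- The classical Jacobi polynomial `P_n^{(a,b)}` (hypergeometric representation,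
normalised so that `P_n^{(a,b)}(1) = Γ(n+a+1)/(Γ(n+1)Γ(a+1))`). -/
noncomputable def jacobiP (a b : ℝ) (n : ℕ) (x : ℝ) : ℝ :=
  ∑ s ∈ Finset.range (n + 1),
    (Real.Gamma ((n : ℝ) + a + 1) /
        (Real.Gamma ((s : ℝ) + a + 1) * (Nat.factorial (n - s) : ℝ))) *
      (Real.Gamma ((n : ℝ) + b + 1) /
        (Real.Gamma ((n : ℝ) - (s : ℝ) + b + 1) * (Nat.factorial s : ℝ))) *
      ((x - 1) / 2) ^ s * ((x + 1) / 2) ^ (n - s)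

/-- `M_ℓ^{(a,b)}`, the `L₂(w_{a,b})` normalisation constant of `P_ℓ^{(a,b)}`. -/
noncomputable def jacobiM (a b : ℝ) (ℓ : ℕ) : ℝ :=
  (2 : ℝ) ^ (a + b + 1) / (2 * (ℓ : ℝ) + a + b + 1) *
    (Real.Gamma ((ℓ : ℝ) + a + 1) * Real.Gamma ((ℓ : ℝ) + b + 1)) /
    (Real.Gamma ((ℓ : ℝ) + 1) * Real.Gamma ((ℓ : ℝ) + a + b + 1))

/-- The generalised Dirichlet kernel
`v_L^{(a,b)}(t,s) = Σ_{ℓ=0}^{L} (M_ℓ^{(a,b)})⁻¹ P_ℓ^{(a,b)}(t) P_ℓ^{(a,b)}(s)`. -/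
noncomputable def dirichletJ (a b : ℝ) (L : ℕ) (t s : ℝ) : ℝ :=
  ∑ ℓ ∈ Finset.range (L + 1), (jacobiM a b ℓ)⁻¹ * jacobiP a b ℓ t * jacobiP a b ℓ s

/-- The filtered Jacobi kernel
`v_{L,g}^{(a,b)}(t,s) = Σ_{ℓ=0}^{2L−1} g(ℓ/L) (M_ℓ^{(a,b)})⁻¹ P_ℓ^{(a,b)}(t) P_ℓ^{(a,b)}(s)`. -/
noncomputable def filteredJ (a b : ℝ) (g : ℝ → ℝ) (L : ℕ) (t s : ℝ) : ℝ :=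
  ∑ ℓ ∈ Finset.range (2 * L),
    g ((ℓ : ℝ) / (L : ℝ)) * (jacobiM a b ℓ)⁻¹ * jacobiP a b ℓ t * jacobiP a b ℓ s

/-- `Z(d,ℓ)`, the dimension of the space of spherical harmonics of degree `ℓ` on `S^d`. -/
noncomputable def Zdim (d ℓ : ℕ) : ℝ :=
  (2 * (ℓ : ℝ) + (d : ℝ) - 1) * Real.Gamma ((ℓ : ℝ) + (d : ℝ) - 1) /
    (Real.Gamma (d : ℝ) * Real.Gamma ((ℓ : ℝ) + 1))

/-- The normalised Legendre polynomial `P_ℓ^{(d+1)}` for `S^d`. -/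
noncomputable def normLegendre (d ℓ : ℕ) (t : ℝ) : ℝ :=
  jacobiP (((d : ℝ) - 2) / 2) (((d : ℝ) - 2) / 2) ℓ t /
    jacobiP (((d : ℝ) - 2) / 2) (((d : ℝ) - 2) / 2) ℓ 1

/-- The Dirichlet kernel on `S^d`: `v_L^{(d)}(t) = Σ_{ℓ=0}^L Z(d,ℓ) P_ℓ^{(d+1)}(t)`. -/
noncomputable def sphDirichlet (d L : ℕ) (t : ℝ) : ℝ :=
  ∑ ℓ ∈ Finset.range (L + 1), Zdim d ℓ * normLegendre d ℓ t

/-- The filtered kernel on `S^d`: `v_{L,g}^{(d)}(t) = Σ_{ℓ=0}^∞ g(ℓ/L) Z(d,ℓ) P_ℓ^{(d+1)}(t)`. -/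
noncomputable def sphFiltered (d : ℕ) (g : ℝ → ℝ) (L : ℕ) (t : ℝ) : ℝ :=
  ∑' ℓ : ℕ, g ((ℓ : ℝ) / (L : ℝ)) * Zdim d ℓ * normLegendre d ℓ t

/-- The surface area `|S^n| = 2π^{(n+1)/2}/Γ((n+1)/2)` of the unit sphere `S^n`. -/
noncomputable def sphereArea (n : ℕ) : ℝ :=
  2 * Real.pi ^ (((n : ℝ) + 1) / 2) / Real.Gamma (((n : ℝ) + 1) / 2)

/-- `m_{a,b}(θ) = π^{−1/2} (sin(θ/2))^{−a−1/2} (cos(θ/2))^{−b−1/2}`. -/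
noncomputable def mAB (a b θ : ℝ) : ℝ :=
  Real.pi ^ (-(1 / 2 : ℝ)) * Real.sin (θ / 2) ^ (-a - 1 / 2) *
    Real.cos (θ / 2) ^ (-b - 1 / 2)

/-- `ω_γ(z) = z − γπ/2 − π/4`. -/
noncomputable def omegaA (γ z : ℝ) : ℝ := z - γ * Real.pi / 2 - Real.pi / 4

/-!
The Christoffel–Darboux identity at the endpoint expresses `v_L^{(α,β)}(1, ·)` as an explicit
Gamma-function multiple of `P_L^{(α+1,β)}`, and the Gamma factor is asymptotic to its power of
`L̃ = L + (α + β + 2) / 2` with relative error `O(1/L)`. It remains to prove the Darboux–Hilb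
asymptotics of `P_n^{(a,b)}(cos θ)` for `a > 1/2`, uniformly for `θ` from `1/N` to `π/2`, where
`N = n + (a + b + 1) / 2`. A Liouville transform turns the Jacobi equation into a perturbation of
the equation of `z^{-a} J_a(z)` in `z = N θ`, with a bounded potential of size `O(1/N²)`. A Gronwall
estimate for the energy of the difference of the two solutions, weighted by `z^{a+1/2}` and started
at `z = 0`, bounds it by `O(1/N)`. Finally `z^{-a} J_a(z)` is the Poisson integral of `cos (z t)`
against `(1 - t²)^{a-1/2}`, whose asymptotics come from rotating the contour into the upper half
plane at `t = ±1`.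
-/

/-! ### Comparison for the radial equation -/

/-- `y` solves the radial equation `y'' + (2ν/x) y' = f` on `(0, b]`, where `y'` is the derivative
of `y`. Nothing is required at the singular point `0`. -/
structure RadialODE (ν b : ℝ) (f y y' : ℝ → ℝ) : Prop where
  hasDerivAt : ∀ x ∈ Set.Ioc 0 b, HasDerivAt y (y' x) x
  hasDerivAt_deriv : ∀ x ∈ Set.Ioc 0 b, HasDerivAt y' (f x - 2 * ν / x * y' x) x

namespace RadialODE

variable {ν b : ℝ} {f g y y' w w' : ℝ → ℝ}

lemma congr_forcing (hy : RadialODE ν b f y y') (hfg : ∀ x ∈ Set.Ioc 0 b, f x = g x) :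
    RadialODE ν b g y y' :=
  ⟨hy.hasDerivAt, fun x hx => hfg x hx ▸ hy.hasDerivAt_deriv x hx⟩

lemma sub (hy : RadialODE ν b f y y') (hw : RadialODE ν b g w w') :
    RadialODE ν b (fun x => f x - g x) (fun x => y x - w x) (fun x => y' x - w' x) where
  hasDerivAt x hx := (hy.hasDerivAt x hx).sub (hw.hasDerivAt x hx)
  hasDerivAt_deriv x hx :=
    ((hy.hasDerivAt_deriv x hx).sub (hw.hasDerivAt_deriv x hx)).congr_deriv (by ring)

lemma div_const (hy : RadialODE ν b f y y') (c : ℝ) :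
    RadialODE ν b (fun x => f x / c) (fun x => y x / c) (fun x => y' x / c) where
  hasDerivAt x hx := (hy.hasDerivAt x hx).div_const c
  hasDerivAt_deriv x hx := ((hy.hasDerivAt_deriv x hx).div_const c).congr_deriv (by ring)

lemma comp_div (hy : RadialODE ν b f y y') {c : ℝ} (hc : 0 < c) :
    RadialODE ν (c * b) (fun x => f (x / c) / c ^ 2) (fun x => y (x / c))
      (fun x => y' (x / c) / c) := by
  have hmem : ∀ x ∈ Set.Ioc 0 (c * b), x / c ∈ Set.Ioc 0 b := fun x hx =>
    ⟨div_pos hx.1 hc, (div_le_iff₀' hc).2 hx.2⟩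
  have hscale : ∀ x : ℝ, HasDerivAt (fun x => x / c) (1 / c) x := fun x =>
    (hasDerivAt_id x).div_const c
  refine ⟨fun x hx => ?_, fun x hx => ?_⟩
  · exact ((hy.hasDerivAt _ (hmem x hx)).comp x (hscale x)).congr_deriv (mul_one_div _ _)
  · have hx0 : x ≠ 0 := hx.1.ne'
    refine (((hy.hasDerivAt_deriv _ (hmem x hx)).comp x (hscale x)).div_const c).congr_deriv ?_
    field_simp

lemma hasDerivAt_rpow_mul (hy : RadialODE ν b f y y') {x : ℝ} (hx : x ∈ Set.Ioc 0 b) :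
    HasDerivAt (fun x => x ^ ν * y x) (x ^ ν * (y' x + ν * y x / x)) x := by
  have hx0 : x ≠ 0 := hx.1.ne'
  refine ((Real.hasDerivAt_rpow_const (p := ν) (Or.inl hx0)).mul
    (hy.hasDerivAt x hx)).congr_deriv ?_
  rw [Real.rpow_sub_one hx0]
  field_simp
  ring

lemma hasDerivAt_deriv_rpow_mul (hy : RadialODE ν b f y y') {x : ℝ} (hx : x ∈ Set.Ioc 0 b) :
    HasDerivAt (fun x => x ^ ν * (y' x + ν * y x / x))
      (ν * (ν - 1) / x ^ 2 * (x ^ ν * y x) + x ^ ν * f x) x := by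
  have hx0 : x ≠ 0 := hx.1.ne'
  refine ((Real.hasDerivAt_rpow_const (p := ν) (Or.inl hx0)).mul
    ((hy.hasDerivAt_deriv x hx).add
      (((hy.hasDerivAt x hx).const_mul ν).div (hasDerivAt_id x) hx0))).congr_deriv ?_
  simp only [id, Pi.add_apply, Pi.div_apply]
  rw [Real.rpow_sub_one hx0]
  field_simp
  ring

end RadialODE

section Gronwall

variable {F F' H H' : ℝ → ℝ} {a b c k M : ℝ}

lemma mul_exp_neg_le_of_deriv_le (hab : a ≤ b)
    (hF : ∀ x ∈ Set.Icc a b, HasDerivAt F (F' x) x)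
    (hH : ∀ x ∈ Set.Icc a b, HasDerivAt H (H' x) x)
    (hle : ∀ x ∈ Set.Icc a b, F' x ≤ H' x * F x + k)
    (hM : ∀ x ∈ Set.Icc a b, k * exp (-H x) ≤ M) :
    F b * exp (-H b) ≤ F a * exp (-H a) + M * (b - a) := by
  have hderiv : ∀ x ∈ Set.Icc a b, HasDerivAt (fun x => F x * exp (-H x) - M * x)
      ((F' x - H' x * F x) * exp (-H x) - M) x := fun x hx =>
    (((hF x hx).mul (hH x hx).neg.exp).sub ((hasDerivAt_id x).const_mul M)).congr_deriv
      (by simp only [Pi.neg_apply]; ring)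
  have hanti : AntitoneOn (fun x => F x * exp (-H x) - M * x) (Set.Icc a b) := by
    refine antitoneOn_of_hasDerivWithinAt_nonpos (convex_Icc a b)
      (fun x hx => (hderiv x hx).continuousAt.continuousWithinAt)
      (fun x hx => (hderiv x (interior_subset hx)).hasDerivWithinAt) (fun x hx => ?_)
    have hx' := interior_subset hx
    have : (F' x - H' x * F x) * exp (-H x) ≤ k * exp (-H x) :=
      mul_le_mul_of_nonneg_right (by linarith [hle x hx']) (exp_pos _).le
    linarith [hM x hx']
  have := hanti (Set.left_mem_Icc.2 hab) (Set.right_mem_Icc.2 hab) hab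
  dsimp only at this
  linarith

lemma le_exp_mul_of_deriv_le_of_tendsto_zero (hb : 0 < b) (hc : 0 ≤ c) (hk : 0 ≤ k)
    (hF : ∀ x ∈ Set.Ioc 0 b, HasDerivAt F (F' x) x)
    (hle : ∀ x ∈ Set.Ioc 0 b, F' x ≤ c * F x + k)
    (h0 : Filter.Tendsto F (nhdsWithin 0 (Set.Ioi 0)) (nhds 0)) :
    F b ≤ exp (c * b) * (k * b) := by
  have hstep : ∀ a ∈ Set.Ioc 0 b,
      F b * exp (-(c * b)) ≤ F a * exp (-(c * a)) + k * (b - a) := by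
    intro a ha
    have hmem : ∀ x ∈ Set.Icc a b, x ∈ Set.Ioc 0 b := fun x hx => ⟨ha.1.trans_le hx.1, hx.2⟩
    refine mul_exp_neg_le_of_deriv_le (H := fun x => c * x) (H' := fun _ => c) ha.2
      (fun x hx => hF x (hmem x hx)) (fun x _ => by simpa using (hasDerivAt_id x).const_mul c)
      (fun x hx => hle x (hmem x hx)) (fun x hx => ?_)
    exact mul_le_of_le_one_right hk
      (exp_le_one_iff.2 (neg_nonpos.2 (mul_nonneg hc (hmem x hx).1.le)))
  have hlim : Filter.Tendsto (fun a => F a * exp (-(c * a)) + k * (b - a))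
      (nhdsWithin 0 (Set.Ioi 0)) (nhds (0 * exp (-(c * 0)) + k * (b - 0))) := by
    refine (h0.mul ?_).add ?_ <;>
      exact (Continuous.tendsto (by fun_prop) _).mono_left nhdsWithin_le_nhds
  have hle : F b * exp (-(c * b)) ≤ 0 * exp (-(c * 0)) + k * (b - 0) :=
    ge_of_tendsto hlim (Filter.mem_of_superset (Ioc_mem_nhdsGT hb) hstep)
  rw [exp_neg, ← div_eq_mul_inv, div_le_iff₀ (exp_pos _)] at hle
  linarith

end Gronwall

section Energy

variable {ν T ε K : ℝ} {D e g W : ℝ → ℝ}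

lemma neg_two_mul_mul_add_le {D e g w k δ : ℝ} (hδ : 0 < δ) (hg : |g| ≤ ε) (hw : |w| ≤ k) :
    -(2 * e * (g * (D + w))) ≤ (ε + δ) * (e ^ 2 + D ^ 2) + (ε * k) ^ 2 / δ := by
  have hlin : -(2 * e * (g * D)) ≤ ε * (e ^ 2 + D ^ 2) := by
    have hsq : |2 * (e * D)| ≤ e ^ 2 + D ^ 2 :=
      abs_le.2 ⟨by nlinarith [sq_nonneg (e + D)], by nlinarith [sq_nonneg (e - D)]⟩
    calc -(2 * e * (g * D)) ≤ |g * (2 * (e * D))| := by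
          rw [show 2 * e * (g * D) = g * (2 * (e * D)) by ring]; exact neg_le_abs _
      _ ≤ ε * (e ^ 2 + D ^ 2) := by rw [abs_mul]; gcongr; exact (abs_nonneg g).trans hg
  have hconst : -(2 * e * (g * w)) ≤ δ * e ^ 2 + (ε * k) ^ 2 / δ := by
    have hgw : (g * w) ^ 2 ≤ (ε * k) ^ 2 := by
      rw [← sq_abs, abs_mul]; gcongr; exact (abs_nonneg g).trans hg
    calc -(2 * e * (g * w)) = δ * e ^ 2 + (g * w) ^ 2 / δ - (δ * e + g * w) ^ 2 / δ := by
          field_simp; ring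
      _ ≤ δ * e ^ 2 + (g * w) ^ 2 / δ := sub_le_self _ (by positivity)
      _ ≤ δ * e ^ 2 + (ε * k) ^ 2 / δ := by gcongr
  nlinarith [mul_nonneg hδ.le (sq_nonneg D)]

lemma RadialODE.energy_le_of_tendsto_zero (hν : 0 ≤ ν)
    (hD : RadialODE ν 1 (fun x => -D x - g x * (D x + W x)) D e)
    (hg : ∀ x ∈ Set.Ioc (0 : ℝ) 1, |g x| ≤ ε) (hW : ∀ x ∈ Set.Ioc (0 : ℝ) 1, |W x| ≤ K)
    (h0 : Filter.Tendsto (fun x => e x ^ 2 + D x ^ 2) (nhdsWithin 0 (Set.Ioi 0)) (nhds 0)) :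
    e 1 ^ 2 + D 1 ^ 2 ≤ exp (ε + 1) * (ε * K) ^ 2 := by
  have hε : 0 ≤ ε := (abs_nonneg _).trans (hg 1 (by simp))
  have henergy := le_exp_mul_of_deriv_le_of_tendsto_zero (c := ε + 1) (k := (ε * K) ^ 2) one_pos
    (by positivity) (sq_nonneg _)
    (fun x hx => ((hD.hasDerivAt_deriv x hx).pow 2).add ((hD.hasDerivAt x hx).pow 2))
    (fun x hx => ?_) h0
  · simpa using henergy
  · have hdamping : 0 ≤ 4 * ν / x * e x ^ 2 := by have := hx.1; positivity
    have := neg_two_mul_mul_add_le (D := D x) (e := e x) one_pos (hg x hx) (hW x hx)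
    simp only [Pi.add_apply, Pi.pow_apply]
    push_cast
    rw [div_one] at this
    linear_combination this + hdamping

lemma energy_mul_exp_le {κ k δ x : ℝ} {d d' w : ℝ → ℝ} (hκ : 0 ≤ κ) (hδ : 0 < δ) (hx : 1 ≤ x)
    (hd : ∀ t ∈ Set.Icc 1 x, HasDerivAt d (d' t) t)
    (hd' : ∀ t ∈ Set.Icc 1 x, HasDerivAt d' (κ / t ^ 2 * d t - d t - g t * (d t + w t)) t)
    (hg : ∀ t ∈ Set.Icc 1 x, |g t| ≤ ε) (hw : ∀ t ∈ Set.Icc 1 x, |w t| ≤ k) :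
    (d' x ^ 2 + d x ^ 2) * exp (-((ε + δ) * x - κ / x)) ≤
      (d' 1 ^ 2 + d 1 ^ 2) * exp (-(ε + δ - κ)) + (ε * k) ^ 2 / δ * exp κ * (x - 1) := by
  have hε : 0 ≤ ε := (abs_nonneg _).trans (hg 1 ⟨le_rfl, hx⟩)
  have hpos : ∀ t ∈ Set.Icc 1 x, 0 < t := fun t ht => one_pos.trans_le ht.1
  have := mul_exp_neg_le_of_deriv_le (k := (ε * k) ^ 2 / δ) (M := (ε * k) ^ 2 / δ * exp κ)
    (F := fun t => d' t ^ 2 + d t ^ 2) (H := fun t => (ε + δ) * t - κ / t)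
    (H' := fun t => ε + δ + κ / t ^ 2) hx
    (fun t ht => ((hd' t ht).pow 2).add ((hd t ht).pow 2))
    (fun t ht => ?_) (fun t ht => ?_) (fun t ht => ?_)
  · simpa using this
  · have ht0 := (hpos t ht).ne'
    refine (((hasDerivAt_id t).const_mul (ε + δ)).sub
      ((hasDerivAt_const t κ).div (hasDerivAt_id t) ht0)).congr_deriv ?_
    simp only [id]
    ring
  · have hcross : κ / t ^ 2 * (2 * (d' t * d t)) ≤ κ / t ^ 2 * (d' t ^ 2 + d t ^ 2) :=
      mul_le_mul_of_nonneg_left (by nlinarith [sq_nonneg (d' t - d t)]) (by positivity)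
    have := neg_two_mul_mul_add_le (D := d t) (e := d' t) hδ (hg t ht) (hw t ht)
    push_cast
    linear_combination this + hcross
  · gcongr
    have hinv : κ / t ≤ κ := div_le_self hκ ht.1
    have : 0 ≤ (ε + δ) * t := mul_nonneg (by positivity) (hpos t ht).le
    linarith

lemma add_mul_sq_add_sq_le (ν p q : ℝ) :
    (p + ν * q) ^ 2 + q ^ 2 ≤ (2 * ν ^ 2 + 2) * (p ^ 2 + q ^ 2) := by
  nlinarith [sq_nonneg (p - ν * q), mul_nonneg (sq_nonneg ν) (sq_nonneg p), sq_nonneg q]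

/- On `[1, T]` the damping term is not needed: the Liouville transform `x ^ ν * D` satisfies an
equation whose coefficient `ν * (ν - 1) / x ^ 2` is integrable. -/
lemma RadialODE.sq_rpow_mul_le_of_one (hν : 1 ≤ ν)
    (hD : RadialODE ν T (fun x => -D x - g x * (D x + W x)) D e)
    (hg : ∀ x ∈ Set.Icc 1 T, |g x| ≤ ε) (hW : ∀ x ∈ Set.Icc 1 T, |x ^ ν * W x| ≤ K)
    {x : ℝ} (hx : x ∈ Set.Icc 1 T) :
    (x ^ ν * D x) ^ 2 ≤
      exp (ν * (ν - 1) + ε * T + 1) * ((e 1 + ν * D 1) ^ 2 + D 1 ^ 2 + (ε * K * T) ^ 2) := by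
  have hT : 1 ≤ T := hx.1.trans hx.2
  have hT0 : 0 < T := one_pos.trans_le hT
  have hx0 : 0 < x := one_pos.trans_le hx.1
  have hε : 0 ≤ ε := (abs_nonneg _).trans (hg T ⟨hT, le_rfl⟩)
  set κ := ν * (ν - 1)
  have hκ0 : 0 ≤ κ := mul_nonneg (by linarith) (by linarith)
  have hmem : ∀ t ∈ Set.Icc 1 x, t ∈ Set.Ioc 0 T := fun t ht =>
    ⟨one_pos.trans_le ht.1, ht.2.trans hx.2⟩
  have hgrowth := energy_mul_exp_le (g := g) (w := fun t => t ^ ν * W t) hκ0 (inv_pos.2 hT0) hx.1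
    (fun t ht => hD.hasDerivAt_rpow_mul (hmem t ht))
    (fun t ht => (hD.hasDerivAt_deriv_rpow_mul (hmem t ht)).congr_deriv (by ring))
    (fun t ht => hg t ⟨ht.1, ht.2.trans hx.2⟩) (fun t ht => hW t ⟨ht.1, ht.2.trans hx.2⟩)
  simp only [Real.one_rpow, one_mul, div_one] at hgrowth
  rw [exp_neg, ← div_eq_mul_inv, div_le_iff₀ (exp_pos _)] at hgrowth
  calc (x ^ ν * D x) ^ 2
      ≤ (x ^ ν * (e x + ν * D x / x)) ^ 2 + (x ^ ν * D x) ^ 2 := le_add_of_nonneg_left (sq_nonneg _)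
    _ ≤ _ := hgrowth
    _ ≤ (((e 1 + ν * D 1) ^ 2 + D 1 ^ 2) * exp κ + (ε * K) ^ 2 / T⁻¹ * exp κ * T)
          * exp (ε * T + 1) := by
        have hx1 : x - 1 ≤ T := by linarith [hx.2]
        have hexp₁ : -(ε + T⁻¹ - κ) ≤ κ := by have := inv_pos.2 hT0; linarith
        have hexp₂ : (ε + T⁻¹) * x - κ / x ≤ ε * T + 1 := by
          have h₁ : (ε + T⁻¹) * x ≤ (ε + T⁻¹) * T := by gcongr; exact hx.2
          have h₂ : (ε + T⁻¹) * T = ε * T + 1 := by field_simp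
          linarith [div_nonneg hκ0 hx0.le]
        gcongr
    _ = _ := by rw [add_assoc κ, Real.exp_add κ]; field_simp

lemma RadialODE.sq_rpow_mul_le (hν : 1 ≤ ν)
    (hD : RadialODE ν T (fun x => -D x - g x * (D x + W x)) D e)
    (hg : ∀ x ∈ Set.Ioc 0 T, |g x| ≤ ε) (hW : ∀ x ∈ Set.Ioc 0 T, |W x| ≤ K)
    (hW' : ∀ x ∈ Set.Icc 1 T, |x ^ ν * W x| ≤ K)
    (h0 : Filter.Tendsto (fun x => e x ^ 2 + D x ^ 2) (nhdsWithin 0 (Set.Ioi 0)) (nhds 0))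
    {x : ℝ} (hx : x ∈ Set.Icc 1 T) :
    (x ^ ν * D x) ^ 2 ≤
      exp (ν * (ν - 1) + ε * T + 1) * ((2 * ν ^ 2 + 2) * exp (ε + 1) + 1) * (ε * K * T) ^ 2 := by
  have hT : 1 ≤ T := hx.1.trans hx.2
  have hmem : ∀ t ∈ Set.Ioc (0 : ℝ) 1, t ∈ Set.Ioc 0 T := fun t ht => ⟨ht.1, ht.2.trans hT⟩
  have henergy_one : e 1 ^ 2 + D 1 ^ 2 ≤ exp (ε + 1) * (ε * K) ^ 2 :=
    RadialODE.energy_le_of_tendsto_zero (by linarith)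
      ⟨fun t ht => hD.hasDerivAt t (hmem t ht), fun t ht => hD.hasDerivAt_deriv t (hmem t ht)⟩
      (fun t ht => hg t (hmem t ht)) (fun t ht => hW t (hmem t ht)) h0
  have hinitial : (e 1 + ν * D 1) ^ 2 + D 1 ^ 2 ≤
      (2 * ν ^ 2 + 2) * (exp (ε + 1) * (ε * K * T) ^ 2) := by
    refine (add_mul_sq_add_sq_le ν (e 1) (D 1)).trans ?_
    gcongr
    refine henergy_one.trans ?_
    rw [mul_pow (ε * K)]
    gcongr
    exact le_mul_of_one_le_right (sq_nonneg _) (one_le_pow₀ hT)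
  calc (x ^ ν * D x) ^ 2
      ≤ exp (ν * (ν - 1) + ε * T + 1)
          * ((e 1 + ν * D 1) ^ 2 + D 1 ^ 2 + (ε * K * T) ^ 2) :=
        hD.sq_rpow_mul_le_of_one hν (fun t ht => hg t ⟨one_pos.trans_le ht.1, ht.2⟩) hW' hx
    _ ≤ exp (ν * (ν - 1) + ε * T + 1)
          * ((2 * ν ^ 2 + 2) * (exp (ε + 1) * (ε * K * T) ^ 2) + (ε * K * T) ^ 2) := by gcongr
    _ = _ := by ring

end Energy

/-! ### Jacobi polynomials -/

section Jacobi

open Polynomial Finset.HasAntidiagonal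

/-- The coefficient of `((x - 1) / 2) ^ s * ((x + 1) / 2) ^ m` in `P_{s+m}^{(a,b)}(x)`; indexing by
pairs `(s, m)` on an antidiagonal avoids the truncated subtraction in `jacobiP`. -/
noncomputable def jacobiCoeff (a b : ℝ) (s m : ℕ) : ℝ :=
  Gamma (s + m + a + 1) * Gamma (s + m + b + 1) /
    (Gamma (s + a + 1) * Gamma (m + b + 1) * s.factorial * m.factorial)

/-- `P_n^{(a,b)}` as a formal polynomial, so that its derivatives can be taken algebraically. -/
noncomputable def jacobiPoly (a b : ℝ) (n : ℕ) : ℝ[X] :=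
  ∑ p ∈ antidiagonal n, C (jacobiCoeff a b p.1 p.2) *
    ((C (1 / 2) * (X - 1)) ^ p.1 * (C (1 / 2) * (X + 1)) ^ p.2)

variable {a b : ℝ}

lemma jacobiP_eq_sum_antidiagonal (a b : ℝ) (n : ℕ) (x : ℝ) :
    jacobiP a b n x = ∑ p ∈ antidiagonal n,
      jacobiCoeff a b p.1 p.2 * (((x - 1) / 2) ^ p.1 * ((x + 1) / 2) ^ p.2) := by
  rw [Finset.Nat.sum_antidiagonal_eq_sum_range_succ
    (fun s m => jacobiCoeff a b s m * (((x - 1) / 2) ^ s * ((x + 1) / 2) ^ m)), jacobiP]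
  refine Finset.sum_congr rfl fun s hs => ?_
  have hsn : ((n - s : ℕ) : ℝ) = n - s := Nat.cast_sub (Finset.mem_range_succ_iff.1 hs)
  rw [jacobiCoeff, hsn, add_sub_cancel]
  ring

lemma eval_jacobiPoly (a b : ℝ) (n : ℕ) (x : ℝ) :
    (jacobiPoly a b n).eval x = jacobiP a b n x := by
  rw [jacobiP_eq_sum_antidiagonal, jacobiPoly, eval_finsetSum]
  refine Finset.sum_congr rfl fun p _ => ?_
  simp only [eval_mul, eval_pow, eval_C, eval_sub, eval_add, eval_X, eval_one]
  ring

lemma jacobiP_zero (ha : -1 < a) (hb : -1 < b) (x : ℝ) : jacobiP a b 0 x = 1 := by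
  have ha' := (Gamma_pos_of_pos (by linarith : 0 < a + 1)).ne'
  have hb' := (Gamma_pos_of_pos (by linarith : 0 < b + 1)).ne'
  simp [jacobiP, ha', hb']

lemma jacobiP_one_right (hb : -1 < b) (n : ℕ) :
    jacobiP a b n 1 = Gamma (n + a + 1) / (Gamma (a + 1) * n.factorial) := by
  have hb' : Gamma (n + b + 1) ≠ 0 :=
    (Gamma_pos_of_pos (by have := n.cast_nonneg (α := ℝ); linarith)).ne'
  rw [jacobiP, Finset.sum_eq_single 0]
  · simp only [Nat.cast_zero, Nat.sub_zero, sub_zero, Nat.factorial_zero, pow_zero, zero_add]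
    field_simp
    norm_num
  · intro s _ hs
    simp [hs]
  · simp

lemma jacobiP_one_right_pos (ha : -1 < a) (hb : -1 < b) (n : ℕ) : 0 < jacobiP a b n 1 := by
  have := n.cast_nonneg (α := ℝ)
  rw [jacobiP_one_right hb]
  exact div_pos (Gamma_pos_of_pos (by linarith))
    (mul_pos (Gamma_pos_of_pos (by linarith)) (by positivity))

lemma jacobiCoeff_add_one_left_mul (ha : -1 < a) (s m : ℕ) :
    jacobiCoeff (a + 1) b s m * (s + a + 1) = (s + m + a + 1) * jacobiCoeff a b s m := by
  have hs : (0 : ℝ) < s + a + 1 := by have := s.cast_nonneg (α := ℝ); linarith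
  have hsm : (0 : ℝ) < s + m + a + 1 := by have := m.cast_nonneg (α := ℝ); linarith
  have hG₁ : Gamma (s + (a + 1) + 1) = (s + a + 1) * Gamma (s + a + 1) := by
    rw [← Gamma_add_one hs.ne', ← add_assoc]
  have hG₂ : Gamma (s + m + (a + 1) + 1) = (s + m + a + 1) * Gamma (s + m + a + 1) := by
    rw [← Gamma_add_one hsm.ne', ← add_assoc]
  rw [jacobiCoeff, jacobiCoeff, hG₁, hG₂]
  field_simp

lemma jacobiCoeff_succ_left_mul (hb : -1 < b) (s m : ℕ) :
    jacobiCoeff a b (s + 1) m * (s + 1) = jacobiCoeff (a + 1) b s m * (s + m + b + 1) := by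
  have hsm : (0 : ℝ) < s + m + b + 1 := by
    have := s.cast_nonneg (α := ℝ); have := m.cast_nonneg (α := ℝ); linarith
  have hG : Gamma (s + 1 + m + b + 1) = (s + m + b + 1) * Gamma (s + m + b + 1) := by
    rw [← Gamma_add_one hsm.ne']; ring_nf
  rw [jacobiCoeff, jacobiCoeff, Nat.factorial_succ]
  push_cast
  rw [hG, show (s + 1 + m + a + 1 : ℝ) = s + m + (a + 1) + 1 by ring,
    show (s + 1 + a + 1 : ℝ) = s + (a + 1) + 1 by ring]
  field_simp

lemma jacobiCoeff_succ_right_mul (ha : -1 < a) (hb : -1 < b) (s m : ℕ) :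
    jacobiCoeff a b s (m + 1) * ((m + 1) * (m + 1 + b)) =
      jacobiCoeff (a + 1) b s m * (s + m + b + 1) * (s + a + 1) := by
  have := s.cast_nonneg (α := ℝ)
  have := m.cast_nonneg (α := ℝ)
  have hsa : (0 : ℝ) < s + a + 1 := by linarith
  have hmb : (0 : ℝ) < m + b + 1 := by linarith
  have hsm : (0 : ℝ) < s + m + b + 1 := by linarith
  have hG₁ : Gamma (s + (m + 1) + b + 1) = (s + m + b + 1) * Gamma (s + m + b + 1) := by
    rw [← Gamma_add_one hsm.ne']; ring_nf
  have hG₂ : Gamma (m + 1 + b + 1) = (m + b + 1) * Gamma (m + b + 1) := by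
    rw [← Gamma_add_one hmb.ne']; ring_nf
  have hG₃ : Gamma (s + (a + 1) + 1) = (s + a + 1) * Gamma (s + a + 1) := by
    rw [← Gamma_add_one hsa.ne', ← add_assoc]
  rw [jacobiCoeff, jacobiCoeff, Nat.factorial_succ]
  push_cast
  rw [hG₁, hG₂, hG₃, show (s + (m + 1) + a + 1 : ℝ) = s + m + (a + 1) + 1 by ring]
  field_simp
  ring

section Monomial

variable {U V : ℝ[X]}

lemma two_mul_left_mul_derivative_monomial (hU : derivative U = C (1 / 2))
    (hV : derivative V = C (1 / 2)) (hVU : V = 1 + U) (s m : ℕ) :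
    2 * (U * derivative (U ^ s * V ^ m)) =
      (C (s : ℝ) + C (m : ℝ)) * (U ^ s * V ^ m) - C (m : ℝ) * (U ^ s * V ^ (m - 1)) := by
  have hhalf : (2 : ℝ[X]) * C (1 / 2) = 1 := by
    rw [← C_ofNat, ← C_mul]; norm_num
  have hUs : C (s : ℝ) * (U ^ (s - 1) * U) = C (s : ℝ) * U ^ s := by
    cases s <;> simp [pow_succ]
  have hVm : C (m : ℝ) * (V ^ (m - 1) * V) = C (m : ℝ) * V ^ m := by
    cases m <;> simp [pow_succ]
  rw [derivative_mul, derivative_pow, derivative_pow, hU, hV]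
  linear_combination
    (C (s : ℝ) * U ^ s * V ^ m + C (m : ℝ) * U ^ s * V ^ (m - 1) * U) * hhalf +
    2 * C (1 / 2) * V ^ m * hUs + U ^ s * hVm - C (m : ℝ) * U ^ s * V ^ (m - 1) * hVU

lemma two_mul_right_mul_derivative_monomial (hU : derivative U = C (1 / 2))
    (hV : derivative V = C (1 / 2)) (hVU : V = 1 + U) (s m : ℕ) :
    2 * (V * derivative (U ^ s * V ^ m)) =
      (C (s : ℝ) + C (m : ℝ)) * (U ^ s * V ^ m) + C (s : ℝ) * (U ^ (s - 1) * V ^ m) := by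
  have hhalf : (2 : ℝ[X]) * C (1 / 2) = 1 := by
    rw [← C_ofNat, ← C_mul]; norm_num
  have hUs : C (s : ℝ) * (U ^ (s - 1) * U) = C (s : ℝ) * U ^ s := by
    cases s <;> simp [pow_succ]
  have hVm : C (m : ℝ) * (V ^ (m - 1) * V) = C (m : ℝ) * V ^ m := by
    cases m <;> simp [pow_succ]
  rw [derivative_mul, derivative_pow, derivative_pow, hU, hV]
  linear_combination
    (C (m : ℝ) * U ^ s * V ^ m + C (s : ℝ) * U ^ (s - 1) * V ^ m * V) * hhalf +
    2 * C (1 / 2) * U ^ s * hVm + V ^ m * hUs + C (s : ℝ) * U ^ (s - 1) * V ^ m * hVU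

/- With `P = U ^ s * V ^ m`, the second derivative enters only through `U * V * P''`, which comes
from differentiating `2 * U * V * P' = (s * V + m * U) * P`. -/
lemma four_mul_derivative_derivative_monomial (hU : derivative U = C (1 / 2))
    (hV : derivative V = C (1 / 2)) (hVU : V = 1 + U) (s m : ℕ) :
    4 * (U * V * derivative (derivative (U ^ s * V ^ m))) =
      (C (s : ℝ) + C (m : ℝ)) * (U ^ s * V ^ m) +
        2 * (C (s : ℝ) * V + C (m : ℝ) * U - U - V) * derivative (U ^ s * V ^ m) := by
  have hhalf : (2 : ℝ[X]) * C (1 / 2) = 1 := by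
    rw [← C_ofNat, ← C_mul]; norm_num
  have hVm : C (m : ℝ) * (V ^ (m - 1) * V) = C (m : ℝ) * V ^ m := by
    cases m <;> simp [pow_succ]
  have hUP := two_mul_left_mul_derivative_monomial hU hV hVU s m
  set P := U ^ s * V ^ m
  have hUVP : 2 * (U * V * derivative P) = (C (s : ℝ) * V + C (m : ℝ) * U) * P := by
    linear_combination V * hUP - U ^ s * hVm + C (m : ℝ) * P * hVU
  have hsecond := congrArg derivative hUVP
  simp only [derivative_mul, derivative_add, derivative_ofNat, derivative_C, hU, hV, zero_mul,
    zero_add] at hsecond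
  linear_combination 2 * hsecond +
    ((C (s : ℝ) + C (m : ℝ)) * P - 2 * (U + V) * derivative P) * hhalf

lemma jacobiOperator_monomial (a b : ℝ) (hX : X = U + V) (hU : derivative U = C (1 / 2))
    (hV : derivative V = C (1 / 2)) (hVU : V = 1 + U) (s m : ℕ) :
    (1 - X ^ 2) * derivative (derivative (U ^ s * V ^ m)) +
        (C (b - a) - C (a + b + 2) * X) * derivative (U ^ s * V ^ m) +
        C ((s + m : ℝ) * (s + m + a + b + 1)) * (U ^ s * V ^ m) =
      C (m * (m + b)) * (U ^ s * V ^ (m - 1)) - C (s * (s + a)) * (U ^ (s - 1) * V ^ m) := by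
  have hUP := two_mul_left_mul_derivative_monomial hU hV hVU s m
  have hVP := two_mul_right_mul_derivative_monomial hU hV hVU s m
  have hUVP := four_mul_derivative_derivative_monomial hU hV hVU s m
  simp only [map_add, map_sub, map_mul, map_one, map_ofNat]
  rw [hX]
  generalize derivative (U ^ s * V ^ m) = P' at *
  subst hVU
  linear_combination -hUVP - (C (s : ℝ) + C a) * hVP - (C (m : ℝ) + C b) * hUP

end Monomial

lemma jacobiPoly_differential_equation (ha : -1 < a) (hb : -1 < b) (n : ℕ) :
    (1 - X ^ 2) * derivative (derivative (jacobiPoly a b n)) +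
      (C (b - a) - C (a + b + 2) * X) * derivative (jacobiPoly a b n) +
      C (n * (n + a + b + 1)) * jacobiPoly a b n = 0 := by
  set U : ℝ[X] := C (1 / 2) * (X - 1)
  set V : ℝ[X] := C (1 / 2) * (X + 1)
  have hhalf : (2 : ℝ[X]) * C (1 / 2) = 1 := by
    rw [← C_ofNat, ← C_mul]; norm_num
  have hmonomial : ∀ p ∈ antidiagonal n, _ := fun p _ => jacobiOperator_monomial a b
    (U := U) (V := V) (by simp only [U, V]; linear_combination -X * hhalf) (by simp [U])
    (by simp [V]) (by simp only [U, V]; linear_combination hhalf) p.1 p.2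
  calc _ = ∑ p ∈ antidiagonal n, C (jacobiCoeff a b p.1 p.2) *
        (C (p.2 * (p.2 + b)) * (U ^ p.1 * V ^ (p.2 - 1)) -
          C (p.1 * (p.1 + a)) * (U ^ (p.1 - 1) * V ^ p.2)) := by
        simp only [jacobiPoly, derivative_sum, derivative_C_mul, Finset.mul_sum,
          ← Finset.sum_add_distrib]
        refine Finset.sum_congr rfl fun p hp => ?_
        have hn : (n : ℝ) = p.1 + p.2 := by exact_mod_cast (mem_antidiagonal.1 hp).symm
        rw [← hmonomial p hp, hn]
        ring
    _ = 0 := by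
        cases n with
        | zero => simp
        | succ k =>
          simp only [mul_sub, Finset.sum_sub_distrib]
          rw [Finset.Nat.sum_antidiagonal_succ', Finset.Nat.sum_antidiagonal_succ]
          simp only [Nat.cast_zero, zero_mul, map_zero, mul_zero, zero_add, add_tsub_cancel_right,
            ← Finset.sum_sub_distrib]
          refine Finset.sum_eq_zero fun p _ => ?_
          have hcoeff : jacobiCoeff a b p.1 (p.2 + 1) * ((p.2 + 1) * (p.2 + 1 + b)) =
              jacobiCoeff a b (p.1 + 1) p.2 * ((p.1 + 1) * (p.1 + 1 + a)) := by
            linear_combination jacobiCoeff_succ_right_mul ha hb p.1 p.2 -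
              (p.1 + a + 1 : ℝ) * jacobiCoeff_succ_left_mul (a := a) hb p.1 p.2
          push_cast
          rw [← mul_assoc (C _) (C _), ← mul_assoc (C _) (C _), ← C_mul, ← C_mul, hcoeff, sub_self]

/-- The derivative of `P_n^{(a,b)}`. -/
noncomputable def jacobiPDeriv (a b : ℝ) (n : ℕ) (x : ℝ) : ℝ :=
  (derivative (jacobiPoly a b n)).eval x

/-- The second derivative of `P_n^{(a,b)}`. -/
noncomputable def jacobiPDeriv₂ (a b : ℝ) (n : ℕ) (x : ℝ) : ℝ :=
  (derivative (derivative (jacobiPoly a b n))).eval x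

lemma hasDerivAt_jacobiP (a b : ℝ) (n : ℕ) (x : ℝ) :
    HasDerivAt (jacobiP a b n) (jacobiPDeriv a b n x) x :=
  ((jacobiPoly a b n).hasDerivAt x).congr_of_eventuallyEq
    (.of_forall fun y => (eval_jacobiPoly a b n y).symm)

lemma hasDerivAt_jacobiPDeriv (a b : ℝ) (n : ℕ) (x : ℝ) :
    HasDerivAt (jacobiPDeriv a b n) (jacobiPDeriv₂ a b n x) x :=
  (derivative (jacobiPoly a b n)).hasDerivAt x

lemma jacobiP_differential_equation (ha : -1 < a) (hb : -1 < b) (n : ℕ) (x : ℝ) :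
    (1 - x ^ 2) * jacobiPDeriv₂ a b n x + (b - a - (a + b + 2) * x) * jacobiPDeriv a b n x +
      n * (n + a + b + 1) * jacobiP a b n x = 0 := by
  simpa [jacobiPDeriv, jacobiPDeriv₂, eval_jacobiPoly] using
    congrArg (Polynomial.eval x) (jacobiPoly_differential_equation ha hb n)

lemma mul_jacobiP_add_one_left (ha : -1 < a) (hb : -1 < b) (k : ℕ) (x : ℝ) :
    (k + 1 + b) * jacobiP (a + 1) b k x = ∑ p ∈ antidiagonal (k + 1),
      jacobiCoeff a b p.1 p.2 / (p.1 + a + 1) * (p.2 * (p.2 + b) - p.1 * (p.1 + a + 1)) *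
        (((x - 1) / 2) ^ p.1 * ((x + 1) / 2) ^ p.2) := by
  have hpos : ∀ s : ℕ, (s + a + 1 : ℝ) ≠ 0 := fun s => by
    have := s.cast_nonneg (α := ℝ); exact (by linarith : (0 : ℝ) < s + a + 1).ne'
  have hsplit : ∀ p : ℕ × ℕ,
      jacobiCoeff a b p.1 p.2 / (p.1 + a + 1) * (p.2 * (p.2 + b) - p.1 * (p.1 + a + 1)) *
        (((x - 1) / 2) ^ p.1 * ((x + 1) / 2) ^ p.2) =
      jacobiCoeff a b p.1 p.2 * (p.2 * (p.2 + b)) / (p.1 + a + 1) *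
        (((x - 1) / 2) ^ p.1 * ((x + 1) / 2) ^ p.2) -
      jacobiCoeff a b p.1 p.2 * p.1 * (((x - 1) / 2) ^ p.1 * ((x + 1) / 2) ^ p.2) := fun p => by
    field_simp [hpos p.1]
  simp only [hsplit, Finset.sum_sub_distrib]
  rw [Finset.Nat.sum_antidiagonal_succ', Finset.Nat.sum_antidiagonal_succ,
    jacobiP_eq_sum_antidiagonal, Finset.mul_sum]
  simp only [Nat.cast_zero, zero_mul, mul_zero, zero_div, zero_add,
    ← Finset.sum_sub_distrib]
  refine Finset.sum_congr rfl fun p hp => ?_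
  have hk : (k : ℝ) = p.1 + p.2 := by exact_mod_cast (mem_antidiagonal.1 hp).symm
  push_cast
  rw [jacobiCoeff_succ_right_mul ha hb, jacobiCoeff_succ_left_mul hb,
    mul_div_cancel_right₀ _ (hpos p.1), hk]
  ring

lemma jacobiP_contiguous (ha : -1 < a) (hb : -1 < b) (k : ℕ) (x : ℝ) :
    (2 * (k + 1) + a + b + 1) * jacobiP a b (k + 1) x =
      (k + 1 + a + b + 1) * jacobiP (a + 1) b (k + 1) x -
        (k + 1 + b) * jacobiP (a + 1) b k x := by
  rw [mul_jacobiP_add_one_left ha hb, jacobiP_eq_sum_antidiagonal a,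
    jacobiP_eq_sum_antidiagonal (a + 1), Finset.mul_sum, Finset.mul_sum,
    ← Finset.sum_sub_distrib]
  refine Finset.sum_congr rfl fun p hp => ?_
  have hk : (k + 1 : ℝ) = p.1 + p.2 := by exact_mod_cast (mem_antidiagonal.1 hp).symm
  have hpos : (p.1 + a + 1 : ℝ) ≠ 0 := by
    have := p.1.cast_nonneg (α := ℝ); exact (by linarith : (0 : ℝ) < p.1 + a + 1).ne'
  rw [eq_div_of_mul_eq hpos (jacobiCoeff_add_one_left_mul ha p.1 p.2), hk]
  field_simp
  ring

lemma inv_jacobiM_mul_jacobiP_one (ha : -1 < a) (hb : -1 < b) (n : ℕ) :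
    (jacobiM a b n)⁻¹ * jacobiP a b n 1 =
      2 ^ (-(a + b + 1)) / Gamma (a + 1) *
        ((2 * n + a + b + 1) * Gamma (n + a + b + 1) / Gamma (n + b + 1)) := by
  have := n.cast_nonneg (α := ℝ)
  have hna := (Gamma_pos_of_pos (by linarith : (0 : ℝ) < n + a + 1)).ne'
  have h2 : (2 : ℝ) ^ (a + b + 1) ≠ 0 := (Real.rpow_pos_of_pos two_pos _).ne'
  rw [jacobiP_one_right hb, jacobiM, Real.rpow_neg two_pos.le, Gamma_nat_eq_factorial]
  simp only [mul_inv, div_eq_mul_inv, inv_inv]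
  field_simp

/-- Summing the contiguous relation telescopes the Dirichlet kernel at the endpoint `1`. -/
lemma dirichletJ_one_left (ha : -1 < a) (hb : -1 < b) (hab : a + b + 1 ≠ 0)
    (L : ℕ) (x : ℝ) :
    dirichletJ a b L 1 x = 2 ^ (-(a + b + 1)) / Gamma (a + 1) *
      (Gamma (L + a + b + 2) / Gamma (L + b + 1)) * jacobiP (a + 1) b L x := by
  induction L with
  | zero =>
    have hG : Gamma (a + b + 2) = (a + b + 1) * Gamma (a + b + 1) := by
      rw [← Gamma_add_one hab]; ring_nf
    rw [dirichletJ, zero_add, Finset.sum_range_one, inv_jacobiM_mul_jacobiP_one ha hb,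
      jacobiP_zero ha hb, jacobiP_zero (by linarith) hb]
    simp only [Nat.cast_zero, mul_zero, zero_add, hG]
  | succ k ih =>
    have := k.cast_nonneg (α := ℝ)
    have hkb : (0 : ℝ) < k + b + 1 := by linarith
    have hkab : (0 : ℝ) < k + a + b + 2 := by linarith
    have hG₁ : Gamma ((k + 1 : ℕ) + b + 1) = (k + b + 1) * Gamma (k + b + 1) := by
      rw [← Gamma_add_one hkb.ne']; push_cast; ring_nf
    have hG₂ : Gamma ((k + 1 : ℕ) + a + b + 2) = (k + a + b + 2) * Gamma (k + a + b + 2) := by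
      rw [← Gamma_add_one hkab.ne']; push_cast; ring_nf
    have hG₃ : Gamma ((k + 1 : ℕ) + a + b + 1) = Gamma (k + a + b + 2) := by
      push_cast; ring_nf
    have hGa := (Gamma_pos_of_pos (by linarith : 0 < a + 1)).ne'
    have hGb := (Gamma_pos_of_pos hkb).ne'
    rw [dirichletJ, Finset.sum_range_succ, ← dirichletJ, ih, inv_jacobiM_mul_jacobiP_one ha hb,
      hG₁, hG₂, hG₃]
    have := jacobiP_contiguous ha hb k x
    push_cast
    field_simp
    linear_combination this

end Jacobi

/-! ### The Poisson integral -/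

section PoissonIntegral

/-- The Poisson integral `∫₋₁¹ cos (z t) (1 - t²) ^ μ dt`. For `0 < μ` it is a constant multiple of
`z ^ (-(μ + 1/2)) * J_{μ + 1/2}(z)`, with `J` the Bessel function of the first kind; it is the model
to which Jacobi polynomials are compared near the endpoint `1`. -/
noncomputable def poissonIntegral (μ z : ℝ) : ℝ :=
  ∫ t in (-1 : ℝ)..1, Real.cos (z * t) * (1 - t ^ 2) ^ μ

/-- The derivative of `poissonIntegral μ`, obtained under the integral sign. -/
noncomputable def poissonIntegralDeriv (μ z : ℝ) : ℝ :=
  ∫ t in (-1 : ℝ)..1, -Real.sin (z * t) * (t * (1 - t ^ 2) ^ μ)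

lemma hasDerivAt_integral_comp_mul_mul {φ φ' p : ℝ → ℝ} (hφ : ∀ x, HasDerivAt φ (φ' x) x)
    (hφ' : Continuous φ') (hbound : ∀ x, |φ' x| ≤ 1) (hp : Continuous p) (a b z : ℝ) :
    HasDerivAt (fun z => ∫ t in a..b, φ (z * t) * p t) (∫ t in a..b, φ' (z * t) * (t * p t)) z := by
  have hφc : Continuous φ := continuous_iff_continuousAt.2 fun x => (hφ x).continuousAt
  refine (intervalIntegral.hasDerivAt_integral_of_dominated_loc_of_deriv_le
    (F := fun z t => φ (z * t) * p t) (F' := fun z t => φ' (z * t) * (t * p t))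
    (bound := fun t => |t * p t|) (s := Set.univ) Filter.univ_mem ?_ ?_ ?_ ?_ ?_ ?_).2
  · exact .of_forall fun z => (by fun_prop : Continuous _).aestronglyMeasurable
  · exact (by fun_prop : Continuous fun t => φ (z * t) * p t).intervalIntegrable _ _
  · exact (by fun_prop : Continuous fun t => φ' (z * t) * (t * p t)).aestronglyMeasurable
  · refine .of_forall fun t _ z _ => ?_
    rw [norm_mul, Real.norm_eq_abs, Real.norm_eq_abs]
    exact mul_le_of_le_one_left (abs_nonneg _) (hbound _)
  · exact (by fun_prop : Continuous fun t => |t * p t|).intervalIntegrable _ _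
  · refine .of_forall fun t _ z _ => ?_
    exact (((hφ (z * t)).comp z (hasDerivAt_mul_const t)).mul_const (p t)).congr_deriv
      (mul_assoc _ _ _)

variable {μ : ℝ}

lemma continuous_one_sub_sq_rpow (hμ : 0 ≤ μ) : Continuous fun t : ℝ => (1 - t ^ 2) ^ μ :=
  Continuous.rpow_const (by fun_prop) fun _ => Or.inr hμ

lemma hasDerivAt_poissonIntegral (hμ : 0 ≤ μ) (z : ℝ) :
    HasDerivAt (poissonIntegral μ) (poissonIntegralDeriv μ z) z :=
  hasDerivAt_integral_comp_mul_mul Real.hasDerivAt_cos Real.continuous_sin.neg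
    (fun x => (abs_neg _).trans_le (Real.abs_sin_le_one x)) (continuous_one_sub_sq_rpow hμ) _ _ z

lemma hasDerivAt_one_sub_sq_rpow_add_one (hμ : 0 ≤ μ) (t : ℝ) :
    HasDerivAt (fun t : ℝ => (1 - t ^ 2) ^ (μ + 1)) (-(2 * (μ + 1) * (t * (1 - t ^ 2) ^ μ))) t := by
  have hbase : HasDerivAt (fun t : ℝ => 1 - t ^ 2) (-(2 * t)) t :=
    ((hasDerivAt_pow 2 t).const_sub 1).congr_deriv (by simp)
  refine (hbase.rpow_const (p := μ + 1) (Or.inr (by linarith))).congr_deriv ?_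
  rw [add_sub_cancel_right]
  ring

lemma two_mul_add_one_mul_poissonIntegralDeriv (hμ : 0 ≤ μ) (z : ℝ) :
    2 * (μ + 1) * poissonIntegralDeriv μ z = -(z * poissonIntegral (μ + 1) z) := by
  have := continuous_one_sub_sq_rpow hμ
  have := continuous_one_sub_sq_rpow (add_nonneg hμ zero_le_one)
  have hderiv (t : ℝ) : HasDerivAt (fun t => Real.sin (z * t) * (1 - t ^ 2) ^ (μ + 1))
      (z * (Real.cos (z * t) * (1 - t ^ 2) ^ (μ + 1))
        + 2 * (μ + 1) * (-Real.sin (z * t) * (t * (1 - t ^ 2) ^ μ))) t :=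
    ((hasDerivAt_const_mul z).sin.mul (hasDerivAt_one_sub_sq_rpow_add_one hμ t)).congr_deriv
      (by ring)
  have hint₁ : IntervalIntegrable (fun t => z * (Real.cos (z * t) * (1 - t ^ 2) ^ (μ + 1)))
      volume (-1) 1 := (by fun_prop : Continuous _).intervalIntegrable _ _
  have hint₂ : IntervalIntegrable
      (fun t => 2 * (μ + 1) * (-Real.sin (z * t) * (t * (1 - t ^ 2) ^ μ))) volume (-1) 1 :=
    (by fun_prop : Continuous _).intervalIntegrable _ _
  have hparts := intervalIntegral.integral_eq_sub_of_hasDerivAt (a := -1) (b := 1)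
    (fun t _ => hderiv t) (hint₁.add hint₂)
  rw [intervalIntegral.integral_add hint₁ hint₂, intervalIntegral.integral_const_mul,
    intervalIntegral.integral_const_mul, one_pow, neg_one_sq, sub_self,
    Real.zero_rpow (by linarith), mul_zero, mul_zero, sub_self] at hparts
  rw [poissonIntegral, poissonIntegralDeriv]
  linarith

lemma integral_cos_mul_sq_eq_poissonIntegral_sub (hμ : 0 ≤ μ) (z : ℝ) :
    ∫ t in (-1 : ℝ)..1, Real.cos (z * t) * (t * (t * (1 - t ^ 2) ^ μ)) =
      poissonIntegral μ z - poissonIntegral (μ + 1) z := by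
  have := continuous_one_sub_sq_rpow hμ
  have := continuous_one_sub_sq_rpow (add_nonneg hμ zero_le_one)
  rw [poissonIntegral, poissonIntegral, ← intervalIntegral.integral_sub
    ((by fun_prop : Continuous _).intervalIntegrable _ _)
    ((by fun_prop : Continuous _).intervalIntegrable _ _)]
  refine intervalIntegral.integral_congr fun t ht => ?_
  rw [Set.uIcc_of_le (by norm_num)] at ht
  have h0 : 0 ≤ 1 - t ^ 2 := by nlinarith [ht.1, ht.2]
  simp only [Real.rpow_add_one' h0 (by linarith : μ + 1 ≠ 0)]
  ring

lemma hasDerivAt_poissonIntegralDeriv (hμ : 0 ≤ μ) {z : ℝ} (hz : z ≠ 0) :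
    HasDerivAt (poissonIntegralDeriv μ)
      (-poissonIntegral μ z - 2 * (μ + 1) / z * poissonIntegralDeriv μ z) z := by
  have := continuous_one_sub_sq_rpow hμ
  refine (hasDerivAt_integral_comp_mul_mul (φ := fun x => -Real.sin x)
    (φ' := fun x => -Real.cos x) (fun x => (Real.hasDerivAt_sin x).neg) Real.continuous_cos.neg
    (fun x => (abs_neg _).trans_le (Real.abs_cos_le_one x))
    (by fun_prop : Continuous fun t : ℝ => t * (1 - t ^ 2) ^ μ) (-1) 1 z).congr_deriv ?_
  simp only [neg_mul, intervalIntegral.integral_neg, integral_cos_mul_sq_eq_poissonIntegral_sub hμ]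
  rw [div_mul_eq_mul_div, two_mul_add_one_mul_poissonIntegralDeriv hμ, neg_div,
    mul_div_cancel_left₀ _ hz]
  ring

lemma radialODE_poissonIntegral (hμ : 0 ≤ μ) (b : ℝ) :
    RadialODE (μ + 1) b (fun z => -poissonIntegral μ z) (poissonIntegral μ)
      (poissonIntegralDeriv μ) :=
  ⟨fun z _ => hasDerivAt_poissonIntegral hμ z,
    fun _ hz => hasDerivAt_poissonIntegralDeriv hμ hz.1.ne'⟩

lemma poissonIntegral_zero_pos (hμ : 0 ≤ μ) : 0 < poissonIntegral μ 0 := by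
  have := continuous_one_sub_sq_rpow hμ
  refine intervalIntegral.intervalIntegral_pos_of_pos_on
    ((by fun_prop : Continuous _).intervalIntegrable _ _) (fun t ht => ?_) (by norm_num)
  have : 0 < 1 - t ^ 2 := by nlinarith [ht.1, ht.2]
  rw [zero_mul, Real.cos_zero, one_mul]
  positivity

lemma abs_poissonIntegral_le (hμ : 0 ≤ μ) (z : ℝ) :
    |poissonIntegral μ z| ≤ poissonIntegral μ 0 := by
  have := continuous_one_sub_sq_rpow hμ
  rw [← Real.norm_eq_abs]
  refine intervalIntegral.norm_integral_le_of_norm_le (by norm_num) (.of_forall fun t ht => ?_)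
    ((by fun_prop : Continuous _).intervalIntegrable _ _)
  have h0 : 0 ≤ (1 - t ^ 2) ^ μ := Real.rpow_nonneg (by nlinarith [ht.1, ht.2]) _
  rw [norm_mul, Real.norm_eq_abs, Real.norm_of_nonneg h0, zero_mul, Real.cos_zero]
  exact mul_le_mul_of_nonneg_right (Real.abs_cos_le_one _) h0

lemma integral_rpow_mul_one_sub_rpow {a b : ℝ} (ha : -1 < a) (hb : -1 < b) :
    ∫ x in (0 : ℝ)..1, x ^ a * (1 - x) ^ b =
      Real.Gamma (a + 1) * Real.Gamma (b + 1) / Real.Gamma (a + 1 + (b + 1)) := by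
  have hcomplex : Complex.betaIntegral ((a + 1 : ℝ) : ℂ) ((b + 1 : ℝ) : ℂ) =
      ((∫ x in (0 : ℝ)..1, x ^ a * (1 - x) ^ b : ℝ) : ℂ) := by
    rw [Complex.betaIntegral, ← intervalIntegral.integral_ofReal]
    refine intervalIntegral.integral_congr fun x hx => ?_
    rw [Set.uIcc_of_le zero_le_one] at hx
    simp only [Complex.ofReal_mul, Complex.ofReal_cpow hx.1,
      Complex.ofReal_cpow (sub_nonneg.2 hx.2), Complex.ofReal_add,
      Complex.ofReal_sub, Complex.ofReal_one, add_sub_cancel_right]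
  have hbeta := ProbabilityTheory.beta_eq_betaIntegralReal (a + 1) (b + 1) (by linarith)
    (by linarith)
  rwa [hcomplex, Complex.ofReal_re, ProbabilityTheory.beta, eq_comm] at hbeta

lemma poissonIntegral_zero_mul_Gamma (hμ : 0 ≤ μ) :
    poissonIntegral μ 0 * Real.Gamma (μ + 3 / 2) = √π * Real.Gamma (μ + 1) := by
  have hsubst : poissonIntegral μ 0 = 2 * ∫ x in (0 : ℝ)..1, 4 ^ μ * (x ^ μ * (1 - x) ^ μ) := by
    have h := intervalIntegral.mul_integral_comp_mul_sub (a := 0) (b := 1) (c := 2) (d := 1)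
      (f := fun t : ℝ => (1 - t ^ 2) ^ μ)
    norm_num only at h
    simp only [poissonIntegral, zero_mul, Real.cos_zero, one_mul]
    rw [← h]
    congr 1
    refine intervalIntegral.integral_congr fun x hx => ?_
    rw [Set.uIcc_of_le zero_le_one] at hx
    have hx₁ : 0 ≤ 1 - x := sub_nonneg.2 hx.2
    rw [← Real.mul_rpow hx.1 hx₁, ← Real.mul_rpow (by norm_num) (mul_nonneg hx.1 hx₁)]
    ring_nf
  have hdup := Real.Gamma_mul_Gamma_add_half (μ + 1)
  have hpow : 4 ^ μ * (2 : ℝ) ^ (1 - 2 * (μ + 1)) = 1 / 2 := by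
    rw [show (4 : ℝ) = 2 ^ (2 : ℝ) by norm_num, ← Real.rpow_mul zero_le_two,
      ← Real.rpow_add two_pos, show 2 * μ + (1 - 2 * (μ + 1)) = -1 by ring, Real.rpow_neg_one]
    norm_num
  have : 0 < Real.Gamma (2 * (μ + 1)) := Real.Gamma_pos_of_pos (by linarith)
  rw [hsubst, intervalIntegral.integral_const_mul,
    integral_rpow_mul_one_sub_rpow (by linarith) (by linarith), ← two_mul (μ + 1),
    show μ + 3 / 2 = μ + 1 + 1 / 2 by ring]
  calc 2 * (4 ^ μ * (Real.Gamma (μ + 1) * Real.Gamma (μ + 1) / Real.Gamma (2 * (μ + 1)))) *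
        Real.Gamma (μ + 1 + 1 / 2)
      = 2 * 4 ^ μ * Real.Gamma (μ + 1) / Real.Gamma (2 * (μ + 1)) *
          (Real.Gamma (μ + 1) * Real.Gamma (μ + 1 + 1 / 2)) := by ring
    _ = 2 * (4 ^ μ * 2 ^ (1 - 2 * (μ + 1))) * √π * Real.Gamma (μ + 1) := by
        rw [hdup]
        field_simp
    _ = √π * Real.Gamma (μ + 1) := by
        rw [hpow]
        ring

/-- The integrand `e^{izt} (1 - t²) ^ μ` whose real part on `[-1, 1]` is integrated in
`poissonIntegral`, as a function on the complex plane. -/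
noncomputable def contourIntegrand (μ z : ℝ) (t : ℂ) : ℂ :=
  Complex.exp (Complex.I * z * t) * (1 - t ^ 2) ^ (μ : ℂ)

/-- The values of `contourIntegrand` on the vertical ray `t = 1 + i y`, with the decaying factor
`e^{-zy} y ^ μ` split off. -/
noncomputable def contourSide (μ z y : ℝ) : ℂ :=
  Complex.exp (Complex.I * z) * ((Real.exp (-(z * y)) * y ^ μ : ℝ) : ℂ) *
    ((y : ℂ) - 2 * Complex.I) ^ (μ : ℂ)

/-- The leading part of `contourSide` as `y → 0`. -/
noncomputable def contourSideLead (μ z y : ℝ) : ℂ :=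
  Complex.exp (Complex.I * z) * ((Real.exp (-(z * y)) * y ^ μ : ℝ) : ℂ) *
    (-(2 * Complex.I)) ^ (μ : ℂ)

lemma re_one_sub_sq (t : ℂ) : (1 - t ^ 2).re = 1 - t.re ^ 2 + t.im ^ 2 := by
  rw [Complex.sub_re, Complex.one_re, sq, Complex.mul_re]
  ring

lemma continuousAt_contourIntegrand (hμ : 0 < μ) (z : ℝ) {t : ℂ} (ht : |t.re| ≤ 1) :
    ContinuousAt (contourIntegrand μ z) t := by
  have hre : 0 ≤ (1 - t ^ 2).re := by
    rw [re_one_sub_sq]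
    nlinarith [(sq_le_one_iff_abs_le_one t.re).2 ht, sq_nonneg t.im]
  have hpow : ContinuousAt (fun t : ℂ => (1 - t ^ 2) ^ (μ : ℂ)) t :=
    ContinuousAt.comp (f := fun t : ℂ => 1 - t ^ 2)
      (Complex.continuousAt_cpow_const_of_re_pos (Or.inl hre) hμ) (by fun_prop)
  unfold contourIntegrand
  fun_prop

lemma differentiableAt_contourIntegrand (μ z : ℝ) {t : ℂ} (ht : |t.re| < 1) :
    DifferentiableAt ℂ (contourIntegrand μ z) t := by
  have hslit : 1 - t ^ 2 ∈ Complex.slitPlane := by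
    refine Or.inl ?_
    rw [re_one_sub_sq]
    nlinarith [(sq_lt_one_iff_abs_lt_one t.re).2 ht, sq_nonneg t.im]
  unfold contourIntegrand
  exact DifferentiableAt.mul (by fun_prop) (DifferentiableAt.cpow (by fun_prop) (by fun_prop) hslit)

lemma ofReal_mul_cpow {x : ℝ} {w : ℂ} (hx : 0 ≤ x) (hμ : μ ≠ 0) (hw : w ≠ 0) :
    ((x : ℂ) * w) ^ (μ : ℂ) = ((x ^ μ : ℝ) : ℂ) * w ^ (μ : ℂ) := by
  rcases hx.eq_or_lt with rfl | hx₀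
  · simp [Real.zero_rpow hμ, hμ]
  · have hx₁ : (x : ℂ) ≠ 0 := Complex.ofReal_ne_zero.2 hx₀.ne'
    rw [Complex.ofReal_cpow hx, Complex.cpow_def_of_ne_zero (mul_ne_zero hx₁ hw),
      Complex.cpow_def_of_ne_zero hx₁, Complex.cpow_def_of_ne_zero hw,
      Complex.log_ofReal_mul hx₀ hw, ← Complex.exp_add, Complex.ofReal_log hx, add_mul]

lemma ofReal_sub_two_mul_I_mem_slitPlane (y : ℝ) : (y : ℂ) - 2 * Complex.I ∈ Complex.slitPlane :=
  Or.inr (by simp)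

lemma contourIntegrand_one_add (hμ : 0 < μ) (z : ℝ) {y : ℝ} (hy : 0 ≤ y) :
    contourIntegrand μ z (1 + y * Complex.I) = contourSide μ z y := by
  have hbase : 1 - (1 + (y : ℂ) * Complex.I) ^ 2 = (y : ℂ) * ((y : ℂ) - 2 * Complex.I) := by
    linear_combination -(y : ℂ) ^ 2 * Complex.I_sq
  have hexp : Complex.I * z * (1 + y * Complex.I) = Complex.I * z + ((-(z * y) : ℝ) : ℂ) := by
    push_cast
    linear_combination (z : ℂ) * y * Complex.I_sq
  rw [contourIntegrand, contourSide, hbase, hexp, Complex.exp_add, ofReal_mul_cpow hy hμ.ne'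
    (Complex.slitPlane_ne_zero (ofReal_sub_two_mul_I_mem_slitPlane y)), Complex.ofReal_mul,
    Complex.ofReal_exp]
  ring

lemma contourIntegrand_neg_one_add (hμ : 0 < μ) (z : ℝ) {y : ℝ} (hy : 0 ≤ y) :
    contourIntegrand μ z (-1 + y * Complex.I) = (starRingEnd ℂ) (contourSide μ z y) := by
  have hbase : 1 - (-1 + (y : ℂ) * Complex.I) ^ 2 =
      (starRingEnd ℂ) (1 - (1 + (y : ℂ) * Complex.I) ^ 2) := by
    simp only [map_sub, map_pow, map_add, map_mul, map_one, Complex.conj_ofReal, Complex.conj_I]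
    ring
  have harg : (1 - (1 + (y : ℂ) * Complex.I) ^ 2).arg ≠ π := fun h => by
    have := (Complex.arg_eq_pi_iff.1 h).1
    simp only [re_one_sub_sq, Complex.add_re, Complex.add_im, Complex.one_re, Complex.one_im,
      Complex.re_ofReal_mul, Complex.im_ofReal_mul, Complex.I_re, Complex.I_im] at this
    nlinarith [sq_nonneg y]
  rw [← contourIntegrand_one_add hμ z hy, contourIntegrand, contourIntegrand, map_mul,
    ← Complex.exp_conj, hbase, Complex.conj_cpow _ _ harg, Complex.conj_ofReal]
  congr 2
  simp only [map_add, map_mul, map_one, Complex.conj_ofReal, Complex.conj_I]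
  ring

lemma re_integral_contourIntegrand_ofReal (hμ : 0 ≤ μ) (z : ℝ) :
    (∫ x in (-1 : ℝ)..1, contourIntegrand μ z x).re = poissonIntegral μ z := by
  have := continuous_one_sub_sq_rpow hμ
  have hvalue : ∀ x ∈ Set.uIcc (-1 : ℝ) 1, contourIntegrand μ z x =
      Complex.exp (Complex.I * z * x) * (((1 - x ^ 2) ^ μ : ℝ) : ℂ) := fun x hx => by
    rw [Set.uIcc_of_le (by norm_num)] at hx
    rw [contourIntegrand, Complex.ofReal_cpow (by nlinarith [hx.1, hx.2])]
    push_cast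
    rfl
  have hcont : Continuous fun x : ℝ =>
      Complex.exp (Complex.I * z * x) * (((1 - x ^ 2) ^ μ : ℝ) : ℂ) := by fun_prop
  rw [intervalIntegral.integral_congr hvalue, ← Complex.reCLM_apply,
    ← Complex.reCLM.intervalIntegral_comp_comm (hcont.intervalIntegrable _ _)]
  refine intervalIntegral.integral_congr fun x _ => ?_
  simp [Complex.exp_re]

-- Cauchy's theorem on the rectangle `[-1, 1] × [0, Y]`.
lemma poissonIntegral_eq_re_add_im (hμ : 0 < μ) (z : ℝ) {Y : ℝ} (hY : 0 ≤ Y) :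
    poissonIntegral μ z =
      (∫ x in (-1 : ℝ)..1, contourIntegrand μ z (x + Y * Complex.I)).re +
        2 * (∫ y in (0 : ℝ)..Y, contourSide μ z y).im := by
  have hcauchy := Complex.integral_boundary_rect_eq_zero_of_continuousOn_of_differentiableOn
    (contourIntegrand μ z) (-1) (1 + Y * Complex.I)
    (fun t ht => (continuousAt_contourIntegrand hμ z
      (abs_le.2 (by simpa using ht.1))).continuousWithinAt)
    (fun t ht => (differentiableAt_contourIntegrand μ z
      (abs_lt.2 (by simpa using ht.1))).differentiableWithinAt)
  have hright : ∫ y in (0 : ℝ)..Y, contourIntegrand μ z (1 + y * Complex.I) =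
      ∫ y in (0 : ℝ)..Y, contourSide μ z y :=
    intervalIntegral.integral_congr fun y hy =>
      contourIntegrand_one_add hμ z (Set.uIcc_of_le hY ▸ hy).1
  have hleft : ∫ y in (0 : ℝ)..Y, contourIntegrand μ z (-1 + y * Complex.I) =
      (starRingEnd ℂ) (∫ y in (0 : ℝ)..Y, contourSide μ z y) := by
    rw [intervalIntegral.integral_of_le hY, intervalIntegral.integral_of_le hY, ← integral_conj]
    exact setIntegral_congr_fun measurableSet_Ioc fun y hy =>
      contourIntegrand_neg_one_add hμ z hy.1.le
  have hre := congrArg Complex.re hcauchy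
  simp only [Complex.neg_re, Complex.one_re, Complex.neg_im, Complex.one_im, neg_zero,
    Complex.add_re, Complex.add_im, Complex.mul_re, Complex.mul_im, Complex.ofReal_re,
    Complex.ofReal_im, Complex.I_re, Complex.I_im, mul_zero, mul_one, sub_zero, add_zero, zero_add,
    Complex.ofReal_zero, zero_mul, Complex.ofReal_neg, Complex.ofReal_one, hright, hleft,
    Complex.sub_re, re_integral_contourIntegrand_ofReal hμ.le, smul_eq_mul, Complex.conj_im,
    Complex.zero_re] at hre
  linarith

lemma norm_contourIntegrand_add_mul_I_le (hμ : 0 ≤ μ) (z : ℝ) {x Y : ℝ} (hx : |x| ≤ 1)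
    (hY : 1 ≤ Y) :
    ‖contourIntegrand μ z (x + Y * Complex.I)‖ ≤ 3 ^ μ * (Y ^ (2 * μ) * Real.exp (-z * Y)) := by
  have hexp : (Complex.I * z * (x + Y * Complex.I)).re = -z * Y := by simp
  have hnorm : ‖(x : ℂ) + Y * Complex.I‖ ^ 2 = x ^ 2 + Y ^ 2 := by
    rw [← Complex.normSq_eq_norm_sq, Complex.normSq_add_mul_I]
  have hbase : ‖1 - ((x : ℂ) + Y * Complex.I) ^ 2‖ ≤ 3 * Y ^ 2 :=
    calc ‖1 - ((x : ℂ) + Y * Complex.I) ^ 2‖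
        ≤ ‖(1 : ℂ)‖ + ‖((x : ℂ) + Y * Complex.I) ^ 2‖ := norm_sub_le _ _
      _ = 1 + (x ^ 2 + Y ^ 2) := by rw [norm_pow, hnorm, norm_one]
      _ ≤ 3 * Y ^ 2 := by nlinarith [(sq_le_one_iff_abs_le_one x).2 hx]
  rw [contourIntegrand, norm_mul, Complex.norm_cpow_real, Complex.norm_exp, hexp]
  calc Real.exp (-z * Y) * ‖1 - ((x : ℂ) + Y * Complex.I) ^ 2‖ ^ μ
      ≤ Real.exp (-z * Y) * (3 * Y ^ 2) ^ μ := by gcongr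
    _ = 3 ^ μ * (Y ^ (2 * μ) * Real.exp (-z * Y)) := by
        rw [Real.mul_rpow (by norm_num) (by positivity), Real.rpow_mul (by linarith),
          Real.rpow_two]
        ring

lemma tendsto_re_integral_contourIntegrand (hμ : 0 ≤ μ) {z : ℝ} (hz : 0 < z) :
    Filter.Tendsto
      (fun Y : ℝ => (∫ x in (-1 : ℝ)..1, contourIntegrand μ z (x + Y * Complex.I)).re)
      Filter.atTop (nhds 0) := by
  have hlim := ((tendsto_rpow_mul_exp_neg_mul_atTop_nhds_zero (2 * μ) z hz).const_mul
    (3 ^ μ)).mul_const |(1 : ℝ) - -1|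
  rw [mul_zero, zero_mul] at hlim
  refine squeeze_zero_norm' ?_ hlim
  filter_upwards [Filter.eventually_ge_atTop 1] with Y hY
  refine (Complex.abs_re_le_norm _).trans
    (intervalIntegral.norm_integral_le_of_norm_le_const fun x hx => ?_)
  rw [Set.uIoc_of_le (by norm_num)] at hx
  exact norm_contourIntegrand_add_mul_I_le hμ z (abs_le.2 ⟨hx.1.le, hx.2⟩) hY

lemma norm_cpow_sub_cpow_le (hμ : 0 ≤ μ) {y : ℝ} (hy : 0 ≤ y) :
    ‖((y : ℂ) - 2 * Complex.I) ^ (μ : ℂ) - (-(2 * Complex.I)) ^ (μ : ℂ)‖ ≤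
      μ * (y + 2) ^ μ * y := by
  have hderiv (x : ℝ) : HasDerivAt (fun y : ℝ => ((y : ℂ) - 2 * Complex.I) ^ (μ : ℂ))
      ((μ : ℂ) * ((x : ℂ) - 2 * Complex.I) ^ ((μ : ℂ) - 1) * 1) x :=
    (((hasDerivAt_id (x : ℂ)).sub_const (2 * Complex.I)).cpow_const
      (ofReal_sub_two_mul_I_mem_slitPlane x)).comp_ofReal
  have hmvt := norm_image_sub_le_of_norm_deriv_le_segment' (C := μ * (y + 2) ^ μ)
    (fun x _ => (hderiv x).hasDerivWithinAt) (fun x hx => ?_) y ⟨hy, le_refl y⟩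
  · simpa using hmvt
  have hlower : 1 ≤ ‖(x : ℂ) - 2 * Complex.I‖ := by
    have him : ((x : ℂ) - 2 * Complex.I).im = -2 := by simp
    have := Complex.abs_im_le_norm ((x : ℂ) - 2 * Complex.I)
    rw [him, abs_neg, abs_two] at this
    linarith
  have hupper : ‖(x : ℂ) - 2 * Complex.I‖ ≤ y + 2 := by
    refine (norm_sub_le _ _).trans ?_
    simp only [Complex.norm_real, norm_mul, Complex.norm_I, Complex.norm_ofNat,
      Real.norm_of_nonneg hx.1]
    linarith [hx.2]
  rw [mul_one, norm_mul, ← Complex.ofReal_one, ← Complex.ofReal_sub, Complex.norm_cpow_real,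
    Complex.norm_real, Real.norm_of_nonneg hμ]
  refine mul_le_mul_of_nonneg_left ?_ hμ
  exact (Real.rpow_le_rpow_of_exponent_le hlower (sub_le_self μ zero_le_one)).trans
    (by gcongr)

lemma add_two_rpow_le_mul_exp_half (hμ : 0 < μ) {y : ℝ} (hy : 0 ≤ y) :
    (y + 2) ^ μ ≤ (2 * μ) ^ μ * Real.exp 1 * Real.exp (y / 2) :=
  calc (y + 2) ^ μ = (2 * μ) ^ μ * ((y + 2) / (2 * μ)) ^ μ := by
        rw [← Real.mul_rpow (by positivity) (by positivity), mul_div_cancel₀ _ (by positivity)]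
    _ ≤ (2 * μ) ^ μ * Real.exp ((y + 2) / (2 * μ)) ^ μ := by
        gcongr
        linarith [Real.add_one_le_exp ((y + 2) / (2 * μ))]
    _ = (2 * μ) ^ μ * Real.exp 1 * Real.exp (y / 2) := by
        rw [← Real.exp_mul, mul_assoc, ← Real.exp_add]
        congr 2
        field_simp
        ring

lemma neg_two_mul_I_cpow (μ : ℝ) :
    (-(2 * Complex.I)) ^ (μ : ℂ) =
      ((2 ^ μ : ℝ) : ℂ) * Complex.exp (((-(μ * π / 2) : ℝ) : ℂ) * Complex.I) := by
  have hI : -Complex.I ≠ 0 := neg_ne_zero.2 Complex.I_ne_zero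
  rw [show -(2 * Complex.I) = ((2 : ℝ) : ℂ) * -Complex.I by push_cast; ring,
    Complex.cpow_def_of_ne_zero (mul_ne_zero (by norm_num) hI),
    Complex.log_ofReal_mul (by norm_num) hI, Complex.log_neg_I,
    Real.rpow_def_of_pos (by norm_num), Complex.ofReal_exp, ← Complex.exp_add]
  congr 1
  push_cast
  ring

lemma integral_Ioi_exp_neg_mul_rpow {s r : ℝ} (hs : -1 < s) (hr : 0 < r) :
    ∫ y in Set.Ioi (0 : ℝ), Real.exp (-(r * y)) * y ^ s =
      (1 / r) ^ (s + 1) * Real.Gamma (s + 1) := by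
  rw [← Real.integral_rpow_mul_exp_neg_mul_Ioi (by linarith) hr, add_sub_cancel_right]
  simp only [mul_comm]

lemma integrableOn_exp_neg_mul_rpow {s r : ℝ} (hs : -1 < s) (hr : 0 < r) :
    IntegrableOn (fun y : ℝ => Real.exp (-(r * y)) * y ^ s) (Set.Ioi 0) := by
  refine .of_integral_ne_zero ?_
  rw [integral_Ioi_exp_neg_mul_rpow hs hr]
  exact (mul_pos (by positivity) (Real.Gamma_pos_of_pos (by linarith))).ne'

lemma continuous_contourSide (hμ : 0 ≤ μ) (z : ℝ) : Continuous (contourSide μ z) := by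
  have : Continuous fun y : ℝ => y ^ μ := Real.continuous_rpow_const hμ
  have : Continuous fun y : ℝ => ((y : ℂ) - 2 * Complex.I) ^ (μ : ℂ) :=
    Continuous.cpow (by fun_prop) (by fun_prop) ofReal_sub_two_mul_I_mem_slitPlane
  unfold contourSide
  fun_prop

lemma norm_contourSide_sub_contourSideLead_le (hμ : 0 < μ) (z : ℝ) {y : ℝ} (hy : 0 < y) :
    ‖contourSide μ z y - contourSideLead μ z y‖ ≤
      μ * ((2 * μ) ^ μ * Real.exp 1) * (Real.exp (-((z - 1 / 2) * y)) * y ^ (μ + 1)) := by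
  have hphase : ‖Complex.exp (Complex.I * z)‖ = 1 := by simp [Complex.norm_exp]
  rw [contourSide, contourSideLead, ← mul_sub, norm_mul, norm_mul, hphase, one_mul,
    Complex.norm_real, Real.norm_of_nonneg (by positivity)]
  calc Real.exp (-(z * y)) * y ^ μ *
        ‖((y : ℂ) - 2 * Complex.I) ^ (μ : ℂ) - (-(2 * Complex.I)) ^ (μ : ℂ)‖
      ≤ Real.exp (-(z * y)) * y ^ μ *
          (μ * ((2 * μ) ^ μ * Real.exp 1 * Real.exp (y / 2)) * y) := by
        gcongr
        refine (norm_cpow_sub_cpow_le hμ.le hy.le).trans ?_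
        gcongr
        exact add_two_rpow_le_mul_exp_half hμ hy.le
    _ = μ * ((2 * μ) ^ μ * Real.exp 1) * (Real.exp (-(z * y) + y / 2) * y ^ (μ + 1)) := by
        rw [Real.exp_add, Real.rpow_add_one hy.ne']
        ring
    _ = _ := by ring_nf

lemma integrableOn_contourSideLead (hμ : -1 < μ) {z : ℝ} (hz : 0 < z) :
    IntegrableOn (contourSideLead μ z) (Set.Ioi 0) :=
  ((integrableOn_exp_neg_mul_rpow hμ hz).ofReal.const_mul _).mul_const _

lemma im_integral_contourSideLead (hμ : -1 < μ) {z : ℝ} (hz : 0 < z) :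
    (∫ y in Set.Ioi (0 : ℝ), contourSideLead μ z y).im =
      (1 / z) ^ (μ + 1) * Real.Gamma (μ + 1) * 2 ^ μ * Real.sin (z - μ * π / 2) := by
  have hphase : Complex.exp (((z - μ * π / 2 : ℝ) : ℂ) * Complex.I) =
      Complex.exp (Complex.I * z) * Complex.exp (((-(μ * π / 2) : ℝ) : ℂ) * Complex.I) := by
    rw [← Complex.exp_add]
    congr 1
    push_cast
    ring
  have hpolar (r : ℝ) : Complex.exp (Complex.I * z) * (r : ℂ) * (-(2 * Complex.I)) ^ (μ : ℂ) =
      ((r * 2 ^ μ : ℝ) : ℂ) * Complex.exp (((z - μ * π / 2 : ℝ) : ℂ) * Complex.I) := by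
    rw [neg_two_mul_I_cpow, hphase, Complex.ofReal_mul]
    ring
  simp only [contourSideLead]
  rw [integral_mul_const, integral_const_mul, integral_complex_ofReal,
    integral_Ioi_exp_neg_mul_rpow hμ hz, hpolar, Complex.im_ofReal_mul,
    Complex.exp_ofReal_mul_I_im]

lemma integrableOn_contourSide_sub_contourSideLead (hμ : 0 < μ) {z : ℝ} (hz : 1 / 2 < z) :
    IntegrableOn (fun y => contourSide μ z y - contourSideLead μ z y) (Set.Ioi 0) :=
  Integrable.mono'
    ((integrableOn_exp_neg_mul_rpow (by linarith) (sub_pos.2 hz)).const_mul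
      (μ * ((2 * μ) ^ μ * Real.exp 1)))
    ((continuous_contourSide hμ.le z).aestronglyMeasurable.sub
      (integrableOn_contourSideLead (by linarith) (by linarith)).aestronglyMeasurable)
    ((ae_restrict_iff' measurableSet_Ioi).2
      (.of_forall fun _ hy => norm_contourSide_sub_contourSideLead_le hμ z hy))

lemma norm_integral_contourSide_sub_contourSideLead_le (hμ : 0 < μ) {z : ℝ} (hz : 1 / 2 < z) :
    ‖∫ y in Set.Ioi (0 : ℝ), (contourSide μ z y - contourSideLead μ z y)‖ ≤
      μ * ((2 * μ) ^ μ * Real.exp 1) *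
        ((1 / (z - 1 / 2)) ^ (μ + 2) * Real.Gamma (μ + 2)) := by
  have hint := (integrableOn_exp_neg_mul_rpow (s := μ + 1) (by linarith) (sub_pos.2 hz)).const_mul
    (μ * ((2 * μ) ^ μ * Real.exp 1))
  refine (norm_integral_le_of_norm_le hint ((ae_restrict_iff' measurableSet_Ioi).2 (.of_forall
    fun _ hy => norm_contourSide_sub_contourSideLead_le hμ z hy))).trans_eq ?_
  rw [integral_const_mul, integral_Ioi_exp_neg_mul_rpow (by linarith) (sub_pos.2 hz), add_assoc,
    one_add_one_eq_two]

lemma integrableOn_contourSide (hμ : 0 < μ) {z : ℝ} (hz : 1 / 2 < z) :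
    IntegrableOn (contourSide μ z) (Set.Ioi 0) :=
  ((integrableOn_contourSide_sub_contourSideLead hμ hz).add
    (integrableOn_contourSideLead (by linarith) (by linarith))).congr
      (.of_forall fun _ => sub_add_cancel _ _)

lemma poissonIntegral_eq_two_mul_im (hμ : 0 < μ) {z : ℝ} (hz : 1 / 2 < z) :
    poissonIntegral μ z = 2 * (∫ y in Set.Ioi (0 : ℝ), contourSide μ z y).im := by
  have hside := intervalIntegral_tendsto_integral_Ioi 0 (integrableOn_contourSide hμ hz)
    Filter.tendsto_id
  have hlim := (tendsto_re_integral_contourIntegrand hμ.le (by linarith)).add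
    (((Complex.continuous_im.tendsto _).comp hside).const_mul 2)
  rw [zero_add] at hlim
  refine tendsto_nhds_unique (tendsto_const_nhds.congr' ?_) hlim
  filter_upwards [Filter.eventually_ge_atTop 0] with Y hY
  exact poissonIntegral_eq_re_add_im hμ z hY

lemma exists_abs_rpow_mul_poissonIntegral_sub_le (hμ : 0 < μ) :
    ∃ C : ℝ, 0 < C ∧ ∀ z : ℝ, 1 ≤ z →
      |z ^ (μ + 1) * poissonIntegral μ z -
        2 ^ (μ + 1) * Real.Gamma (μ + 1) * Real.sin (z - μ * π / 2)| ≤ C / z := by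
  set A := μ * ((2 * μ) ^ μ * Real.exp 1)
  have : 0 < Real.Gamma (μ + 2) := Real.Gamma_pos_of_pos (by linarith)
  refine ⟨2 * (A * (2 ^ (μ + 2) * Real.Gamma (μ + 2))), by positivity, fun z hz => ?_⟩
  have hz₀ : 0 < z := by linarith
  set E := ∫ y in Set.Ioi (0 : ℝ), (contourSide μ z y - contourSideLead μ z y) with hE
  have herror : z ^ (μ + 1) * poissonIntegral μ z -
      2 ^ (μ + 1) * Real.Gamma (μ + 1) * Real.sin (z - μ * π / 2) = z ^ (μ + 1) * (2 * E.im) := by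
    rw [poissonIntegral_eq_two_mul_im hμ (by linarith), hE,
      integral_sub (integrableOn_contourSide hμ (by linarith))
        (integrableOn_contourSideLead (by linarith) hz₀), Complex.sub_im,
      im_integral_contourSideLead (by linarith) hz₀, Real.rpow_add_one two_ne_zero,
      one_div, Real.inv_rpow hz₀.le]
    field_simp
  have hshift : (1 / (z - 1 / 2)) ^ (μ + 2) ≤ (2 / z) ^ (μ + 2) := by
    have : 0 < z - 1 / 2 := by linarith
    gcongr ?_ ^ (μ + 2)
    rw [div_le_div_iff₀ this hz₀]
    linarith
  rw [herror, abs_mul, abs_mul, abs_of_pos (Real.rpow_pos_of_pos hz₀ _), abs_two]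
  calc z ^ (μ + 1) * (2 * |E.im|)
      ≤ z ^ (μ + 1) * (2 * (A * ((2 / z) ^ (μ + 2) * Real.Gamma (μ + 2)))) := by
        gcongr
        refine (Complex.abs_im_le_norm E).trans
          ((norm_integral_contourSide_sub_contourSideLead_le hμ (by linarith)).trans ?_)
        gcongr
    _ = 2 * (A * (2 ^ (μ + 2) * Real.Gamma (μ + 2))) / z := by
        rw [Real.div_rpow zero_le_two hz₀.le, show μ + 2 = μ + 1 + 1 by ring,
          Real.rpow_add_one hz₀.ne' (μ + 1)]
        field_simp

end PoissonIntegral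

/-! ### Ratios of Gamma functions -/

section GammaRatio

open Filter Asymptotics

lemma isBigO_mul_sub_one {l : Filter ℝ} {e f g : ℝ → ℝ} (he : e =O[l] fun _ => (1 : ℝ))
    (hf : (fun x => f x - 1) =O[l] e) (hg : (fun x => g x - 1) =O[l] e) :
    (fun x => f x * g x - 1) =O[l] e := by
  have hprod : (fun x => (f x - 1) * (g x - 1)) =O[l] e :=
    (hf.mul (hg.trans he)).congr_right fun x => mul_one (e x)
  exact ((hprod.add hf).add hg).congr_left fun x => by ring

lemma isBigO_inv_one : (fun x : ℝ => x⁻¹) =O[atTop] fun _ => (1 : ℝ) :=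
  tendsto_inv_atTop_zero.isBigO_one ℝ

lemma isBigO_add_div_add_rpow_sub_one (a b δ : ℝ) :
    (fun x : ℝ => ((x + a) / (x + b)) ^ δ - 1) =O[atTop] fun x => x⁻¹ := by
  have hdiff : DifferentiableAt ℝ (fun t : ℝ => ((1 + a * t) / (1 + b * t)) ^ δ) 0 := by
    refine DifferentiableAt.rpow_const (DifferentiableAt.div (by fun_prop) (by fun_prop) ?_)
      (Or.inl ?_) <;> simp
  have hzero : (fun t : ℝ => ((1 + a * t) / (1 + b * t)) ^ δ - 1) =O[nhds 0] fun t => t := by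
    simpa using hdiff.isBigO_sub
  refine (hzero.comp_tendsto tendsto_inv_atTop_zero).congr' ?_ .rfl
  filter_upwards [eventually_gt_atTop 0] with x hx
  simp only [Function.comp]
  rw [show x + a = x * (1 + a * x⁻¹) by field_simp, show x + b = x * (1 + b * x⁻¹) by field_simp,
    mul_div_mul_left _ _ hx.ne']

lemma Gamma_add_le_Gamma_mul_rpow {x δ : ℝ} (hx : 0 < x) (hδ : δ ∈ Set.Icc 0 1) :
    Real.Gamma (x + δ) ≤ Real.Gamma x * x ^ δ := by
  rcases hδ.1.eq_or_lt with rfl | h₀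
  · simp
  rcases hδ.2.eq_or_lt with rfl | h₁
  · rw [Real.Gamma_add_one hx.ne', Real.rpow_one, mul_comm]
  have hΓ := Real.Gamma_pos_of_pos hx
  have hconvex := Real.Gamma_mul_add_mul_le_rpow_Gamma_mul_rpow_Gamma hx (add_pos hx one_pos)
    (sub_pos.2 h₁) h₀ (sub_add_cancel 1 δ)
  calc Real.Gamma (x + δ) = Real.Gamma ((1 - δ) * x + δ * (x + 1)) := by ring_nf
    _ ≤ Real.Gamma x ^ (1 - δ) * Real.Gamma (x + 1) ^ δ := hconvex
    _ = Real.Gamma x ^ (1 - δ + δ) * x ^ δ := by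
        rw [Real.Gamma_add_one hx.ne', Real.mul_rpow hx.le hΓ.le, Real.rpow_add hΓ]
        ring
    _ = Real.Gamma x * x ^ δ := by rw [sub_add_cancel, Real.rpow_one]

lemma div_add_rpow_le_Gamma_ratio {x δ : ℝ} (hx : 0 < x) (hδ : δ ∈ Set.Icc 0 1) :
    (x / (x + δ)) ^ (1 - δ) ≤ Real.Gamma (x + δ) / (Real.Gamma x * x ^ δ) := by
  have hxδ : 0 < x + δ := by linarith [hδ.1]
  have := Real.Gamma_pos_of_pos hx
  have hupper := Gamma_add_le_Gamma_mul_rpow hxδ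
    (δ := 1 - δ) ⟨sub_nonneg.2 hδ.2, sub_le_self 1 hδ.1⟩
  rw [add_add_sub_cancel, Real.Gamma_add_one hx.ne'] at hupper
  rw [Real.div_rpow hx.le hxδ.le, div_le_div_iff₀ (by positivity) (by positivity)]
  calc x ^ (1 - δ) * (Real.Gamma x * x ^ δ) = x ^ (1 - δ + δ) * Real.Gamma x := by
        rw [Real.rpow_add hx]
        ring
    _ = x * Real.Gamma x := by rw [sub_add_cancel, Real.rpow_one]
    _ ≤ Real.Gamma (x + δ) * (x + δ) ^ (1 - δ) := hupper

lemma isBigO_Gamma_add_div_sub_one_of_mem_Icc {δ : ℝ} (hδ : δ ∈ Set.Icc 0 1) :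
    (fun x => Real.Gamma (x + δ) / (Real.Gamma x * x ^ δ) - 1) =O[atTop] fun x => x⁻¹ := by
  refine IsBigO.trans (IsBigO.of_bound 1 ?_) (isBigO_add_div_add_rpow_sub_one 0 δ (1 - δ))
  filter_upwards [eventually_gt_atTop 0] with x hx
  have hlower := div_add_rpow_le_Gamma_ratio hx hδ
  have hupper : Real.Gamma (x + δ) / (Real.Gamma x * x ^ δ) ≤ 1 :=
    div_le_one_of_le₀ (Gamma_add_le_Gamma_mul_rpow hx hδ)
      (mul_nonneg (Real.Gamma_pos_of_pos hx).le (Real.rpow_nonneg hx.le _))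
  rw [one_mul, add_zero, Real.norm_of_nonpos (sub_nonpos.2 hupper),
    Real.norm_of_nonpos (sub_nonpos.2 (hlower.trans hupper))]
  linarith

lemma isBigO_Gamma_add_div_sub_one (δ : ℝ) :
    (fun x => Real.Gamma (x + δ) / (Real.Gamma x * x ^ δ) - 1) =O[atTop] fun x => x⁻¹ := by
  have hstep (s : ℝ) : ∀ᶠ x : ℝ in atTop, Real.Gamma (x + (s + 1)) / (Real.Gamma x * x ^ (s + 1)) =
      Real.Gamma (x + s) / (Real.Gamma x * x ^ s) * ((x + s) / (x + 0)) ^ (1 : ℝ) := by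
    filter_upwards [eventually_gt_atTop 0, eventually_gt_atTop (-s)] with x hx hxs
    rw [← add_assoc, Real.Gamma_add_one (by linarith), Real.rpow_add_one hx.ne', Real.rpow_one,
      add_zero]
    field_simp
  have hinv (s : ℝ) : ∀ᶠ x : ℝ in atTop,
      ((x + s) / (x + 0)) ^ (1 : ℝ) * ((x + 0) / (x + s)) ^ (1 : ℝ) = 1 := by
    filter_upwards [eventually_gt_atTop 0, eventually_gt_atTop (-s)] with x hx hxs
    have : x + s ≠ 0 := by linarith
    rw [Real.rpow_one, Real.rpow_one, add_zero]
    field_simp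
  rw [← Int.fract_add_floor δ]
  induction ⌊δ⌋ with
  | zero =>
    simpa using isBigO_Gamma_add_div_sub_one_of_mem_Icc
      ⟨Int.fract_nonneg δ, (Int.fract_lt_one δ).le⟩
  | succ n ih =>
    refine (isBigO_mul_sub_one isBigO_inv_one ih
      (isBigO_add_div_add_rpow_sub_one (Int.fract δ + (n : ℤ)) 0 1)).congr' ?_ .rfl
    filter_upwards [hstep (Int.fract δ + (n : ℤ))] with x hx
    rw [← hx]
    push_cast
    ring_nf
  | pred n ih =>
    refine (isBigO_mul_sub_one isBigO_inv_one ih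
      (isBigO_add_div_add_rpow_sub_one 0 (Int.fract δ + (-n - 1 : ℤ)) 1)).congr' ?_ .rfl
    filter_upwards [hstep (Int.fract δ + (-n - 1 : ℤ)), hinv (Int.fract δ + (-n - 1 : ℤ))]
      with x hx hx'
    rw [show Int.fract δ + ((-n : ℤ) : ℝ) = Int.fract δ + (-n - 1 : ℤ) + 1 by push_cast; ring, hx,
      mul_assoc, hx', mul_one]

lemma isBigO_Gamma_div_Gamma_sub_one (a b c : ℝ) :
    (fun x => Real.Gamma (x + a) / (Real.Gamma (x + b) * (x + c) ^ (a - b)) - 1)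
      =O[atTop] fun x => x⁻¹ := by
  have hinv : (fun x : ℝ => (x + b)⁻¹) =O[atTop] fun x => x⁻¹ := by
    refine IsBigO.of_bound 2 ?_
    filter_upwards [eventually_gt_atTop 0, eventually_gt_atTop (-(2 * b))] with x hx hxb
    rw [norm_inv, norm_inv, Real.norm_of_nonneg hx.le, Real.norm_of_nonneg (by linarith),
      ← div_eq_mul_inv, inv_eq_one_div, div_le_div_iff₀ (by linarith) hx]
    linarith
  have hshift := ((isBigO_Gamma_add_div_sub_one (a - b)).comp_tendsto
    (tendsto_atTop_add_const_right atTop b tendsto_id)).trans hinv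
  refine (isBigO_mul_sub_one isBigO_inv_one hshift
    (isBigO_add_div_add_rpow_sub_one b c (a - b))).congr' ?_ .rfl
  filter_upwards [eventually_gt_atTop (-b), eventually_gt_atTop (-c)] with x hxb hxc
  have hb : 0 < x + b := by linarith
  have hc : 0 < x + c := by linarith
  have := Real.Gamma_pos_of_pos hb
  simp only [id]
  rw [add_add_sub_cancel, Real.div_rpow hb.le hc.le]
  field_simp

lemma exists_abs_natCast_le_of_isBigO_inv {f : ℝ → ℝ} (hf : f =O[atTop] fun x => x⁻¹) :
    ∃ C : ℝ, 0 < C ∧ ∀ n : ℕ, 1 ≤ n → |f n| ≤ C / n := by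
  obtain ⟨C, hC, hbound⟩ := bound_of_isBigO_nat_atTop (hf.comp_tendsto tendsto_natCast_atTop_atTop)
  refine ⟨C, hC, fun n hn => ?_⟩
  have hn' : (n : ℝ)⁻¹ ≠ 0 := inv_ne_zero (Nat.cast_ne_zero.2 (by lia))
  simpa [div_eq_mul_inv] using hbound hn'

end GammaRatio

/-! ### The Liouville transformation -/

section Liouville

open Filter Set

lemma cos_div_sin_le_one_div {x : ℝ} (h0 : 0 < x) (h1 : x < π / 2) : cos x / sin x ≤ 1 / x := by
  rw [← one_div_div, ← tan_eq_sin_div_cos]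
  exact one_div_le_one_div_of_le h0 (lt_tan h0 h1).le

lemma one_div_sin_sq_mem_Icc {x : ℝ} (h0 : 0 < x) (h1 : x < π / 2) :
    1 / sin x ^ 2 ∈ Icc (1 / x ^ 2) (1 / x ^ 2 + 1) := by
  have hs : 0 < sin x := sin_pos_of_pos_of_lt_pi h0 (by linarith)
  refine ⟨one_div_le_one_div_of_le (by positivity) (by gcongr; exact sin_le h0.le), ?_⟩
  have hcot := cos_div_sin_le_one_div h0 h1
  have hc : 0 ≤ cos x := cos_nonneg_of_mem_Icc ⟨by linarith, h1.le⟩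
  calc 1 / sin x ^ 2 = (cos x / sin x) ^ 2 + 1 := by
        field_simp
        rw [add_comm, sin_sq_add_cos_sq]
    _ ≤ (1 / x) ^ 2 + 1 := by gcongr
    _ = 1 / x ^ 2 + 1 := by rw [div_pow, one_pow]

lemma abs_cos_div_sin_sub_one_div_le {x : ℝ} (h0 : 0 < x) (h1 : x < π / 2) :
    |cos x / sin x - 1 / x| ≤ x / 2 := by
  have hs : 0 < sin x := sin_pos_of_pos_of_lt_pi h0 (by linarith)
  have hc : 0 ≤ cos x := cos_nonneg_of_mem_Icc ⟨by linarith, h1.le⟩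
  have hupper := cos_div_sin_le_one_div h0 h1
  have hlower : 1 / x - x / 2 ≤ cos x / sin x :=
    calc 1 / x - x / 2 = (1 - x ^ 2 / 2) / x := by field_simp
      _ ≤ cos x / x := by gcongr; exact one_sub_sq_div_two_le_cos
      _ ≤ cos x / sin x := by gcongr; exact sin_le h0.le
  rw [abs_le]
  constructor <;> linarith

lemma sin_half_pos_and_cos_half_pos {θ : ℝ} (hθ : θ ∈ Ioc 0 (π / 2)) :
    0 < sin (θ / 2) ∧ 0 < cos (θ / 2) :=
  ⟨sin_pos_of_pos_of_lt_pi (half_pos hθ.1) (by linarith [hθ.2, pi_pos]),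
    cos_pos_of_mem_Ioo ⟨by linarith [hθ.1, pi_pos], by linarith [hθ.2, pi_pos]⟩⟩

/-- The factor by which the Liouville transformation multiplies `P_n^{(a,b)}(cos θ)`, with
`ν = a + 1/2` and `σ = b + 1/2`. It is `(2 sin(θ/2))^ν cos(θ/2)^σ` divided by `θ^ν`, so that it is
regular at `0`. -/
noncomputable def liouvilleFactor (ν σ θ : ℝ) : ℝ :=
  sinc (θ / 2) ^ ν * cos (θ / 2) ^ σ

/-- The logarithmic derivative of `liouvilleFactor ν σ`. -/
noncomputable def liouvilleLogDeriv (ν σ θ : ℝ) : ℝ :=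
  ν * (cos (θ / 2) / (2 * sin (θ / 2)) - 1 / θ) - σ * (sin (θ / 2) / (2 * cos (θ / 2)))

/-- The bounded potential by which the Liouville-transformed Jacobi equation differs from the
equation of the Bessel functions. -/
noncomputable def liouvillePotential (ν σ θ : ℝ) : ℝ :=
  ν * (ν - 1) * (1 / θ ^ 2 - 1 / (4 * sin (θ / 2) ^ 2)) - σ * (σ - 1) / (4 * cos (θ / 2) ^ 2)

variable (ν σ : ℝ) {θ : ℝ}

lemma rpow_mul_liouvilleFactor (hθ : θ ∈ Ioc 0 (π / 2)) :
    θ ^ ν * liouvilleFactor ν σ θ = 2 ^ ν * sin (θ / 2) ^ ν * cos (θ / 2) ^ σ := by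
  have h0 : 0 < θ := hθ.1
  have hs := (sin_half_pos_and_cos_half_pos hθ).1
  rw [liouvilleFactor, sinc_of_ne_zero (by positivity), ← mul_assoc,
    ← mul_rpow h0.le (by positivity), ← mul_rpow zero_le_two hs.le]
  congr 2
  field_simp

lemma hasDerivAt_liouvilleFactor (hθ : θ ∈ Ioc 0 (π / 2)) :
    HasDerivAt (liouvilleFactor ν σ) (liouvilleFactor ν σ θ * liouvilleLogDeriv ν σ θ) θ := by
  obtain ⟨hs, hc⟩ := sin_half_pos_and_cos_half_pos hθ
  have h0 : 0 < θ := hθ.1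
  have hhalf : HasDerivAt (fun θ : ℝ => θ / 2) (1 / 2) θ := (hasDerivAt_id θ).div_const 2
  have hsinc : HasDerivAt (fun θ => sinc (θ / 2))
      ((cos (θ / 2) * (1 / 2) * (θ / 2) - sin (θ / 2) * (1 / 2)) / (θ / 2) ^ 2) θ :=
    (hhalf.sin.div hhalf (half_pos h0).ne').congr_of_eventuallyEq <| by
      filter_upwards [eventually_ne_nhds h0.ne'] with y hy
      exact sinc_of_ne_zero (div_ne_zero hy two_ne_zero)
  have hsinc_eq : sinc (θ / 2) = sin (θ / 2) / (θ / 2) := sinc_of_ne_zero (half_pos h0).ne'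
  have hsinc_pos : 0 < sinc (θ / 2) := hsinc_eq ▸ by positivity
  refine ((hsinc.rpow_const (p := ν) (Or.inl hsinc_pos.ne')).mul
    (hhalf.cos.rpow_const (p := σ) (Or.inl hc.ne'))).congr_deriv ?_
  rw [liouvilleFactor, liouvilleLogDeriv, rpow_sub_one hsinc_pos.ne', rpow_sub_one hc.ne', hsinc_eq]
  field_simp
  ring

lemma hasDerivAt_liouvilleLogDeriv (hθ : θ ∈ Ioc 0 (π / 2)) :
    HasDerivAt (liouvilleLogDeriv ν σ)
      (ν * (1 / θ ^ 2 - 1 / (4 * sin (θ / 2) ^ 2)) - σ / (4 * cos (θ / 2) ^ 2)) θ := by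
  obtain ⟨hs, hc⟩ := sin_half_pos_and_cos_half_pos hθ
  have hsq := sin_sq_add_cos_sq (θ / 2)
  have hhalf : HasDerivAt (fun θ : ℝ => θ / 2) (1 / 2) θ := (hasDerivAt_id θ).div_const 2
  have hcot : HasDerivAt (fun θ => cos (θ / 2) / (2 * sin (θ / 2)))
      (-(1 / (4 * sin (θ / 2) ^ 2))) θ := by
    refine (hhalf.cos.div (hhalf.sin.const_mul 2) (by positivity)).congr_deriv ?_
    field_simp
    linear_combination (-4) * hsq
  have htan : HasDerivAt (fun θ => sin (θ / 2) / (2 * cos (θ / 2)))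
      (1 / (4 * cos (θ / 2) ^ 2)) θ := by
    refine (hhalf.sin.div (hhalf.cos.const_mul 2) (by positivity)).congr_deriv ?_
    field_simp
    linear_combination 4 * hsq
  have hinv : HasDerivAt (fun θ : ℝ => 1 / θ) (-(1 / θ ^ 2)) θ := by
    simpa [one_div] using hasDerivAt_inv hθ.1.ne'
  exact (((hcot.sub hinv).const_mul ν).sub (htan.const_mul σ)).congr_deriv (by ring)

lemma abs_liouvillePotential_le (hθ : θ ∈ Ioc 0 (π / 2)) :
    |liouvillePotential ν σ θ| ≤ |ν * (ν - 1)| + |σ * (σ - 1)| := by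
  have hc := (sin_half_pos_and_cos_half_pos hθ).2
  have hcos : 1 ≤ 4 * cos (θ / 2) ^ 2 := by
    have : 0 ≤ cos (2 * (θ / 2)) :=
      cos_nonneg_of_mem_Icc ⟨by linarith [hθ.1, pi_pos], by linarith [hθ.2]⟩
    linarith [cos_sq (θ / 2)]
  have hsin : |1 / θ ^ 2 - 1 / (4 * sin (θ / 2) ^ 2)| ≤ 1 := by
    obtain ⟨hlower, hupper⟩ := one_div_sin_sq_mem_Icc (half_pos hθ.1)
      (by linarith [hθ.2, pi_pos])
    have hθ_sq : 1 / θ ^ 2 = 1 / 4 * (1 / (θ / 2) ^ 2) := by field_simp; norm_num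
    have hsin_sq : 1 / (4 * sin (θ / 2) ^ 2) = 1 / 4 * (1 / sin (θ / 2) ^ 2) :=
      (one_div_mul_one_div _ _).symm
    rw [hθ_sq, hsin_sq, abs_le]
    constructor <;> linarith
  calc |liouvillePotential ν σ θ|
      ≤ |ν * (ν - 1)| * |1 / θ ^ 2 - 1 / (4 * sin (θ / 2) ^ 2)|
        + |σ * (σ - 1)| / |4 * cos (θ / 2) ^ 2| := by
        rw [← abs_mul, ← abs_div]
        exact abs_sub _ _
    _ ≤ |ν * (ν - 1)| + |σ * (σ - 1)| := by
        rw [abs_of_pos (by positivity : 0 < 4 * cos (θ / 2) ^ 2)]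
        exact add_le_add (mul_le_of_le_one_right (abs_nonneg _) hsin)
          (div_le_self (abs_nonneg _) hcos)

lemma tendsto_liouvilleFactor : Tendsto (liouvilleFactor ν σ) (nhds 0) (nhds 1) := by
  have hcont : ContinuousAt (liouvilleFactor ν σ) 0 :=
    ((continuous_sinc.comp (continuous_id.div_const 2)).continuousAt.rpow_const
      (Or.inl (by simp))).mul (ContinuousAt.rpow_const (by fun_prop) (Or.inl (by simp)))
  simpa [liouvilleFactor] using hcont.tendsto

lemma tendsto_liouvilleLogDeriv :
    Tendsto (liouvilleLogDeriv ν σ) (nhdsWithin 0 (Ioi 0)) (nhds 0) := by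
  have hcot : Tendsto (fun θ => cos (θ / 2) / (2 * sin (θ / 2)) - 1 / θ)
      (nhdsWithin 0 (Ioi 0)) (nhds 0) := by
    refine squeeze_zero_norm' ?_ (tendsto_id.mono_left nhdsWithin_le_nhds)
    filter_upwards [Ioo_mem_nhdsGT pi_pos] with θ hθ
    have h0 : 0 < θ := hθ.1
    have hbound := abs_cos_div_sin_sub_one_div_le (half_pos h0) (by linarith [hθ.2])
    rw [show cos (θ / 2) / (2 * sin (θ / 2)) - 1 / θ =
      1 / 2 * (cos (θ / 2) / sin (θ / 2) - 1 / (θ / 2)) by field_simp, norm_mul,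
      Real.norm_eq_abs (_ - _), Real.norm_of_nonneg (by norm_num), id]
    linarith
  have htan : ContinuousAt (fun θ => sin (θ / 2) / (2 * cos (θ / 2))) 0 :=
    ContinuousAt.div (by fun_prop) (by fun_prop) (by simp)
  have htan0 := htan.tendsto.mono_left (nhdsWithin_le_nhds (s := Ioi 0))
  unfold liouvilleLogDeriv
  simpa only [zero_div, sin_zero, mul_zero, sub_zero] using
    (hcot.const_mul ν).sub (htan0.const_mul σ)

lemma two_mul_liouvilleLogDeriv_mul_sin (hθ : θ ∈ Ioc 0 (π / 2)) :
    2 * (liouvilleLogDeriv ν σ θ + ν / θ) * sin θ = (ν + σ) * cos θ + ν - σ := by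
  obtain ⟨hs, hc⟩ := sin_half_pos_and_cos_half_pos hθ
  have h0 : 0 < θ := hθ.1
  have hsin : sin θ = 2 * sin (θ / 2) * cos (θ / 2) := by rw [← sin_two_mul]; ring_nf
  have hcos : cos θ = cos (θ / 2) ^ 2 - sin (θ / 2) ^ 2 := by rw [← cos_two_mul']; ring_nf
  rw [liouvilleLogDeriv, hsin, hcos]
  field_simp
  linear_combination (ν - σ) * θ * sin_sq_add_cos_sq (θ / 2)

lemma liouvilleLogDeriv_riccati (hθ : θ ∈ Ioc 0 (π / 2)) :
    ν * (1 / θ ^ 2 - 1 / (4 * sin (θ / 2) ^ 2)) - σ / (4 * cos (θ / 2) ^ 2)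
      + liouvilleLogDeriv ν σ θ ^ 2 + 2 * ν / θ * liouvilleLogDeriv ν σ θ =
      -((ν + σ) ^ 2 / 4 + liouvillePotential ν σ θ) := by
  obtain ⟨hs, hc⟩ := sin_half_pos_and_cos_half_pos hθ
  have hsq := sin_sq_add_cos_sq (θ / 2)
  have hcot : (cos (θ / 2) / (2 * sin (θ / 2))) ^ 2 = 1 / (4 * sin (θ / 2) ^ 2) - 1 / 4 := by
    field_simp
    linear_combination 4 * hsq
  have htan : (sin (θ / 2) / (2 * cos (θ / 2))) ^ 2 = 1 / (4 * cos (θ / 2) ^ 2) - 1 / 4 := by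
    field_simp
    linear_combination 4 * hsq
  have hcot_mul_tan :
      cos (θ / 2) / (2 * sin (θ / 2)) * (sin (θ / 2) / (2 * cos (θ / 2))) = 1 / 4 := by
    field_simp
    norm_num
  rw [liouvilleLogDeriv, liouvillePotential]
  linear_combination ν ^ 2 * hcot + σ ^ 2 * htan - 2 * ν * σ * hcot_mul_tan

lemma hasDerivAt_jacobiP_cos (a b : ℝ) (n : ℕ) (θ : ℝ) :
    HasDerivAt (fun θ => jacobiP a b n (cos θ)) (-(sin θ * jacobiPDeriv a b n (cos θ))) θ :=
  ((hasDerivAt_jacobiP a b n (cos θ)).comp θ (hasDerivAt_cos θ)).congr_deriv (by ring)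

lemma hasDerivAt_sin_mul_jacobiPDeriv_cos {a b : ℝ} (ha : -1 < a) (hb : -1 < b) (n : ℕ) (θ : ℝ) :
    HasDerivAt (fun θ => sin θ * jacobiPDeriv a b n (cos θ))
      (n * (n + a + b + 1) * jacobiP a b n (cos θ)
        - ((a + b + 1) * cos θ + a - b) * jacobiPDeriv a b n (cos θ)) θ := by
  refine ((hasDerivAt_sin θ).mul
    ((hasDerivAt_jacobiPDeriv a b n (cos θ)).comp θ (hasDerivAt_cos θ))).congr_deriv ?_
  simp only [Function.comp]
  linear_combination (-1) * jacobiP_differential_equation ha hb n (cos θ)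
    - jacobiPDeriv₂ a b n (cos θ) * sin_sq_add_cos_sq θ

/-- The Liouville transform of `P_n^{(a,b)}(cos θ)`; it solves a perturbed Bessel equation on
`(0, π/2]`, see `radialODE_jacobiLiouville`. -/
noncomputable def jacobiLiouville (a b : ℝ) (n : ℕ) (θ : ℝ) : ℝ :=
  liouvilleFactor (a + 1 / 2) (b + 1 / 2) θ * jacobiP a b n (cos θ)

/-- The derivative of `jacobiLiouville a b n` on `(0, π/2]`. -/
noncomputable def jacobiLiouvilleDeriv (a b : ℝ) (n : ℕ) (θ : ℝ) : ℝ :=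
  liouvilleFactor (a + 1 / 2) (b + 1 / 2) θ *
    (liouvilleLogDeriv (a + 1 / 2) (b + 1 / 2) θ * jacobiP a b n (cos θ)
      - sin θ * jacobiPDeriv a b n (cos θ))

lemma radialODE_jacobiLiouville {a b : ℝ} (ha : -1 < a) (hb : -1 < b) (n : ℕ) :
    RadialODE (a + 1 / 2) (π / 2)
      (fun θ => -(((n + (a + b + 1) / 2) ^ 2 + liouvillePotential (a + 1 / 2) (b + 1 / 2) θ)
        * jacobiLiouville a b n θ))
      (jacobiLiouville a b n) (jacobiLiouvilleDeriv a b n) := by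
  refine ⟨fun θ hθ => ?_, fun θ hθ => ?_⟩
  · refine ((hasDerivAt_liouvilleFactor _ _ hθ).mul
      (hasDerivAt_jacobiP_cos a b n θ)).congr_deriv ?_
    rw [jacobiLiouvilleDeriv]
    ring
  · refine ((hasDerivAt_liouvilleFactor _ _ hθ).mul
      (((hasDerivAt_liouvilleLogDeriv _ _ hθ).mul (hasDerivAt_jacobiP_cos a b n θ)).sub
        (hasDerivAt_sin_mul_jacobiPDeriv_cos ha hb n θ))).congr_deriv ?_
    have hfirst := two_mul_liouvilleLogDeriv_mul_sin (a + 1 / 2) (b + 1 / 2) hθ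
    have hzeroth := liouvilleLogDeriv_riccati (a + 1 / 2) (b + 1 / 2) hθ
    simp only [Pi.sub_apply, Pi.mul_apply, jacobiLiouville, jacobiLiouvilleDeriv]
    linear_combination liouvilleFactor (a + 1 / 2) (b + 1 / 2) θ *
      (jacobiP a b n (cos θ) * hzeroth - jacobiPDeriv a b n (cos θ) * hfirst)

lemma tendsto_jacobiLiouville (a b : ℝ) (n : ℕ) :
    Tendsto (jacobiLiouville a b n) (nhds 0) (nhds (jacobiP a b n 1)) := by
  have hP := (hasDerivAt_jacobiP_cos a b n 0).continuousAt.tendsto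
  rw [cos_zero] at hP
  unfold jacobiLiouville
  simpa only [one_mul] using (tendsto_liouvilleFactor (a + 1 / 2) (b + 1 / 2)).mul hP

lemma tendsto_jacobiLiouvilleDeriv (a b : ℝ) (n : ℕ) :
    Tendsto (jacobiLiouvilleDeriv a b n) (nhdsWithin 0 (Ioi 0)) (nhds 0) := by
  have hP := (hasDerivAt_jacobiP_cos a b n 0).continuousAt.tendsto
  have hP' : ContinuousAt (fun θ => sin θ * jacobiPDeriv a b n (cos θ)) 0 :=
    continuous_sin.continuousAt.mul
      ((hasDerivAt_jacobiPDeriv a b n _).continuousAt.comp continuous_cos.continuousAt)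
  have := ((tendsto_liouvilleFactor (a + 1 / 2) (b + 1 / 2)).mono_left nhdsWithin_le_nhds).mul
    (((tendsto_liouvilleLogDeriv (a + 1 / 2) (b + 1 / 2)).mul
      (hP.mono_left nhdsWithin_le_nhds)).sub (hP'.tendsto.mono_left nhdsWithin_le_nhds))
  unfold jacobiLiouvilleDeriv
  simpa only [zero_mul, sin_zero, sub_zero, mul_zero] using this

end Liouville

/-! ### Comparison of Jacobi polynomials with Bessel functions -/

section Comparison

open Filter Set

/-- The Bessel function `J_a(z) / z^a`, normalised to be `1` at `0`. -/
noncomputable def normalizedBessel (a z : ℝ) : ℝ :=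
  poissonIntegral (a - 1 / 2) z / poissonIntegral (a - 1 / 2) 0

/-- The derivative of `normalizedBessel a`. -/
noncomputable def normalizedBesselDeriv (a z : ℝ) : ℝ :=
  poissonIntegralDeriv (a - 1 / 2) z / poissonIntegral (a - 1 / 2) 0

/-- The frequency `N = n + (a + b + 1) / 2` with which `P_n^{(a,b)}(cos θ)` oscillates. -/
noncomputable def jacobiFrequency (a b : ℝ) (n : ℕ) : ℝ :=
  n + (a + b + 1) / 2

/-- The Liouville transform of `P_n^{(a,b)}(cos θ)` in the variable `z = N θ`, where `N` is the
`jacobiFrequency`, normalised to tend to `1` at `0`. -/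
noncomputable def normalizedJacobi (a b : ℝ) (n : ℕ) (z : ℝ) : ℝ :=
  jacobiLiouville a b n (z / jacobiFrequency a b n) / jacobiP a b n 1

/-- The derivative of `normalizedJacobi a b n` on `(0, N π/2]`. -/
noncomputable def normalizedJacobiDeriv (a b : ℝ) (n : ℕ) (z : ℝ) : ℝ :=
  jacobiLiouvilleDeriv a b n (z / jacobiFrequency a b n) / jacobiFrequency a b n / jacobiP a b n 1

variable {a b : ℝ}

lemma abs_normalizedBessel_le_one (ha : 1 / 2 ≤ a) (z : ℝ) : |normalizedBessel a z| ≤ 1 := by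
  have hpos := poissonIntegral_zero_pos (sub_nonneg.2 ha)
  rw [normalizedBessel, abs_div, abs_of_pos hpos, div_le_one hpos]
  exact abs_poissonIntegral_le (sub_nonneg.2 ha) z

lemma radialODE_normalizedBessel (ha : 1 / 2 ≤ a) (T : ℝ) :
    RadialODE (a + 1 / 2) T (fun z => -normalizedBessel a z) (normalizedBessel a)
      (normalizedBesselDeriv a) := by
  have hν : a - 1 / 2 + 1 = a + 1 / 2 := by ring
  rw [← hν]
  exact ((radialODE_poissonIntegral (sub_nonneg.2 ha) T).div_const _).congr_forcing
    fun z _ => neg_div _ _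

lemma tendsto_normalizedBessel (ha : 1 / 2 ≤ a) :
    Tendsto (normalizedBessel a) (nhds 0) (nhds 1) := by
  have hcont := (hasDerivAt_poissonIntegral (sub_nonneg.2 ha) 0).continuousAt.tendsto.div_const
    (poissonIntegral (a - 1 / 2) 0)
  rwa [div_self (poissonIntegral_zero_pos (sub_nonneg.2 ha)).ne'] at hcont

lemma tendsto_normalizedBesselDeriv (ha : 1 / 2 ≤ a) :
    Tendsto (normalizedBesselDeriv a) (nhds 0) (nhds 0) := by
  have hμ : 0 ≤ a - 1 / 2 := sub_nonneg.2 ha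
  have hderiv : poissonIntegralDeriv (a - 1 / 2) = fun z =>
      -(z * poissonIntegral (a - 1 / 2 + 1) z) / (2 * (a - 1 / 2 + 1)) := funext fun z => by
    rw [← two_mul_add_one_mul_poissonIntegralDeriv hμ, mul_div_cancel_left₀ _ (by positivity)]
  have hcont : ContinuousAt (poissonIntegral (a - 1 / 2 + 1)) 0 :=
    (hasDerivAt_poissonIntegral (by positivity) 0).continuousAt
  have := (((continuousAt_id.mul hcont).neg.div_const (2 * (a - 1 / 2 + 1))).div_const
    (poissonIntegral (a - 1 / 2) 0)).tendsto
  unfold normalizedBesselDeriv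
  rw [hderiv]
  simpa using this

lemma exists_abs_rpow_mul_normalizedBessel_sub_le (ha : 1 / 2 < a) :
    ∃ C, 0 < C ∧ ∀ z, 1 ≤ z →
      |z ^ (a + 1 / 2) * normalizedBessel a z
        - 2 ^ (a + 1 / 2) * Gamma (a + 1) / √π * cos (omegaA a z)| ≤ C / z := by
  have hμ : 0 < a - 1 / 2 := sub_pos.2 ha
  obtain ⟨C, hC, hbound⟩ := exists_abs_rpow_mul_poissonIntegral_sub_le hμ
  have hpos := poissonIntegral_zero_pos hμ.le
  have hzero := poissonIntegral_zero_mul_Gamma hμ.le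
  refine ⟨C / poissonIntegral (a - 1 / 2) 0, by positivity, fun z hz => ?_⟩
  rw [show a - 1 / 2 + 3 / 2 = a + 1 by ring, show a - 1 / 2 + 1 = a + 1 / 2 by ring] at hzero
  have hamplitude : 2 ^ (a + 1 / 2) * Gamma (a + 1) / √π =
      2 ^ (a + 1 / 2) * Gamma (a + 1 / 2) / poissonIntegral (a - 1 / 2) 0 := by
    rw [div_eq_div_iff (by positivity) hpos.ne']
    linear_combination 2 ^ (a + 1 / 2) * hzero
  have hphase : cos (omegaA a z) = sin (z - (a - 1 / 2) * π / 2) := by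
    rw [omegaA, ← cos_sub_pi_div_two]
    ring_nf
  have hdiff := hbound z hz
  rw [show a - 1 / 2 + 1 = a + 1 / 2 by ring] at hdiff
  rw [normalizedBessel, hamplitude, hphase, ← mul_div_assoc, div_mul_eq_mul_div, ← sub_div, abs_div,
    abs_of_pos hpos, div_right_comm]
  exact div_le_div_of_nonneg_right hdiff hpos.le

lemma exists_abs_rpow_mul_normalizedBessel_le (ha : 1 / 2 < a) :
    ∃ K, 1 ≤ K ∧ ∀ z, 1 ≤ z → |z ^ (a + 1 / 2) * normalizedBessel a z| ≤ K := by
  obtain ⟨C, hC, hbound⟩ := exists_abs_rpow_mul_normalizedBessel_sub_le ha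
  have := Gamma_pos_of_pos (show 0 < a + 1 by linarith)
  set κ := 2 ^ (a + 1 / 2) * Gamma (a + 1) / √π
  have hκ : 0 < κ := by positivity
  refine ⟨1 + C + κ, by linarith, fun z hz => ?_⟩
  have hcos : |κ * cos (omegaA a z)| ≤ κ := by
    rw [abs_mul, abs_of_pos hκ]
    exact mul_le_of_le_one_right hκ.le (abs_cos_le_one _)
  have htri := abs_sub_abs_le_abs_sub (z ^ (a + 1 / 2) * normalizedBessel a z)
    (κ * cos (omegaA a z))
  linarith [hbound z hz, div_le_self hC.le hz]

lemma radialODE_normalizedJacobi (ha : -1 < a) (hb : -1 < b) {n : ℕ}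
    (hN : 0 < jacobiFrequency a b n) :
    RadialODE (a + 1 / 2) (jacobiFrequency a b n * (π / 2))
      (fun z => -normalizedJacobi a b n z
        - liouvillePotential (a + 1 / 2) (b + 1 / 2) (z / jacobiFrequency a b n)
          / jacobiFrequency a b n ^ 2 * normalizedJacobi a b n z)
      (normalizedJacobi a b n) (normalizedJacobiDeriv a b n) := by
  refine (((radialODE_jacobiLiouville ha hb n).comp_div hN).div_const
    (jacobiP a b n 1)).congr_forcing fun z _ => ?_
  rw [normalizedJacobi, ← jacobiFrequency]
  field_simp
  ring

lemma tendsto_normalizedJacobi (ha : -1 < a) (hb : -1 < b) (n : ℕ) :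
    Tendsto (normalizedJacobi a b n) (nhds 0) (nhds 1) := by
  have hscale : Tendsto (fun z => z / jacobiFrequency a b n) (nhds 0) (nhds 0) := by
    simpa using (continuous_id.div_const (jacobiFrequency a b n)).tendsto 0
  have := ((tendsto_jacobiLiouville a b n).comp hscale).div_const (jacobiP a b n 1)
  rwa [div_self (jacobiP_one_right_pos ha hb n).ne'] at this

lemma tendsto_normalizedJacobiDeriv {n : ℕ} (hN : 0 < jacobiFrequency a b n) :
    Tendsto (normalizedJacobiDeriv a b n) (nhdsWithin 0 (Ioi 0)) (nhds 0) := by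
  have hscale : Tendsto (fun z => z / jacobiFrequency a b n) (nhdsWithin 0 (Ioi 0))
      (nhdsWithin 0 (Ioi 0)) := by
    refine tendsto_nhdsWithin_iff.2 ⟨?_, ?_⟩
    · simpa using ((continuous_id.div_const (jacobiFrequency a b n)).tendsto 0).mono_left
        nhdsWithin_le_nhds
    · filter_upwards [self_mem_nhdsWithin] with z hz using div_pos hz hN
  have := (((tendsto_jacobiLiouvilleDeriv a b n).comp hscale).div_const
    (jacobiFrequency a b n)).div_const (jacobiP a b n 1)
  rwa [zero_div, zero_div] at this

lemma radialODE_normalizedJacobi_sub_normalizedBessel (ha : 1 / 2 ≤ a) (hb : -1 < b) {n : ℕ}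
    (hN : 0 < jacobiFrequency a b n) :
    RadialODE (a + 1 / 2) (jacobiFrequency a b n * (π / 2))
      (fun z => -(normalizedJacobi a b n z - normalizedBessel a z)
        - liouvillePotential (a + 1 / 2) (b + 1 / 2) (z / jacobiFrequency a b n)
          / jacobiFrequency a b n ^ 2
          * (normalizedJacobi a b n z - normalizedBessel a z + normalizedBessel a z))
      (fun z => normalizedJacobi a b n z - normalizedBessel a z)
      (fun z => normalizedJacobiDeriv a b n z - normalizedBesselDeriv a z) :=
  ((radialODE_normalizedJacobi (by linarith) hb hN).sub
    (radialODE_normalizedBessel ha _)).congr_forcing fun z _ => by ring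

lemma tendsto_normalizedJacobi_sub_normalizedBessel (ha : 1 / 2 ≤ a) (hb : -1 < b) {n : ℕ}
    (hN : 0 < jacobiFrequency a b n) :
    Tendsto (fun z => (normalizedJacobiDeriv a b n z - normalizedBesselDeriv a z) ^ 2
      + (normalizedJacobi a b n z - normalizedBessel a z) ^ 2) (nhdsWithin 0 (Ioi 0)) (nhds 0) := by
  have hvalue := ((tendsto_normalizedJacobi (a := a) (by linarith) hb n).sub
    (tendsto_normalizedBessel ha)).mono_left (nhdsWithin_le_nhds (s := Ioi 0))
  have hderiv := (tendsto_normalizedJacobiDeriv hN).sub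
    ((tendsto_normalizedBesselDeriv ha).mono_left (nhdsWithin_le_nhds (s := Ioi 0)))
  simpa using (hderiv.pow 2).add (hvalue.pow 2)

lemma RadialODE.abs_rpow_mul_le_div {ν N G K : ℝ} {g W D e : ℝ → ℝ} (hν : 1 ≤ ν) (hN : 1 ≤ N)
    (hD : RadialODE ν (N * (π / 2)) (fun x => -D x - g x * (D x + W x)) D e)
    (hg : ∀ x ∈ Ioc 0 (N * (π / 2)), |g x| ≤ G / N ^ 2)
    (hW : ∀ x ∈ Ioc 0 (N * (π / 2)), |W x| ≤ K)
    (hW' : ∀ x ∈ Icc 1 (N * (π / 2)), |x ^ ν * W x| ≤ K)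
    (h0 : Tendsto (fun x => e x ^ 2 + D x ^ 2) (nhdsWithin 0 (Ioi 0)) (nhds 0))
    {x : ℝ} (hx : x ∈ Icc 1 (N * (π / 2))) :
    |x ^ ν * D x| ≤ √(exp (ν * (ν - 1) + 2 * G + 1) * ((2 * ν ^ 2 + 2) * exp (G + 1) + 1))
      * (4 * G * K) / x := by
  have : 0 < N := one_pos.trans_le hN
  have hx0 : 0 < x := one_pos.trans_le hx.1
  have hK : 0 ≤ K := (abs_nonneg _).trans (hW x ⟨hx0, hx.2⟩)
  have hG : 0 ≤ G := by
    have := (abs_nonneg _).trans (hg x ⟨hx0, hx.2⟩)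
    rwa [le_div_iff₀ (by positivity), zero_mul] at this
  have hGN : G / N ^ 2 ≤ G := div_le_self hG (one_le_pow₀ hN)
  have hT : G / N ^ 2 * (N * (π / 2)) ≤ 2 * G / N := by
    rw [show G / N ^ 2 * (N * (π / 2)) = π / 2 * G / N by field_simp]
    gcongr
    linarith [pi_le_four]
  have hT' : G / N ^ 2 * (N * (π / 2)) ≤ 2 * G := hT.trans (div_le_self (by positivity) hN)
  have hforcing : G / N ^ 2 * K * (N * (π / 2)) ≤ 4 * G * K / x := by
    calc G / N ^ 2 * K * (N * (π / 2)) = G / N ^ 2 * (N * (π / 2)) * K := by ring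
      _ ≤ 2 * G / N * K := by gcongr
      _ = 4 * G * K / (N * 2) := by field_simp; ring
      _ ≤ 4 * G * K / x := by
        gcongr
        exact hx.2.trans (by gcongr; linarith [pi_le_four])
  rw [mul_div_assoc]
  refine abs_le_of_sq_le_sq ((hD.sq_rpow_mul_le hν hg hW hW' h0 hx).trans ?_) (by positivity)
  rw [mul_pow √_, sq_sqrt (by positivity)]
  gcongr

lemma exists_abs_rpow_mul_normalizedJacobi_sub_normalizedBessel_le (ha : 1 / 2 < a)
    (hb : -1 < b) :
    ∃ C, 0 < C ∧ ∀ n : ℕ, 1 ≤ jacobiFrequency a b n →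
      ∀ z ∈ Icc 1 (jacobiFrequency a b n * (π / 2)),
        |z ^ (a + 1 / 2) * (normalizedJacobi a b n z - normalizedBessel a z)| ≤ C / z := by
  obtain ⟨K, hK1, hK⟩ := exists_abs_rpow_mul_normalizedBessel_le ha
  obtain ⟨G, hG, hpotential⟩ : ∃ G, 0 < G ∧ ∀ θ ∈ Ioc 0 (π / 2),
      |liouvillePotential (a + 1 / 2) (b + 1 / 2) θ| ≤ G :=
    ⟨_, by positivity, fun θ hθ => (abs_liouvillePotential_le _ _ hθ).trans (lt_add_one _).le⟩
  refine ⟨√(exp ((a + 1 / 2) * (a + 1 / 2 - 1) + 2 * G + 1)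
    * ((2 * (a + 1 / 2) ^ 2 + 2) * exp (G + 1) + 1)) * (4 * G * K), by positivity,
    fun n hN z hz => ?_⟩
  have hN0 : 0 < jacobiFrequency a b n := one_pos.trans_le hN
  refine (radialODE_normalizedJacobi_sub_normalizedBessel ha.le hb hN0).abs_rpow_mul_le_div
    (by linarith) hN (fun x hx => ?_) (fun x _ => (abs_normalizedBessel_le_one ha.le x).trans hK1)
    (fun x hx => hK x hx.1) (tendsto_normalizedJacobi_sub_normalizedBessel ha.le hb hN0) hz
  rw [abs_div, abs_of_pos (by positivity : 0 < jacobiFrequency a b n ^ 2)]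
  gcongr
  exact hpotential _ ⟨div_pos hx.1 hN0, (div_le_iff₀' hN0).2 hx.2⟩

lemma exists_abs_rpow_mul_normalizedJacobi_sub_le (ha : 1 / 2 < a) (hb : -1 < b) :
    ∃ C, 0 < C ∧ ∀ n : ℕ, 1 ≤ jacobiFrequency a b n →
      ∀ z ∈ Icc 1 (jacobiFrequency a b n * (π / 2)),
        |z ^ (a + 1 / 2) * normalizedJacobi a b n z
          - 2 ^ (a + 1 / 2) * Gamma (a + 1) / √π * cos (omegaA a z)| ≤ C / z := by
  obtain ⟨C₁, hC₁, hJacobi⟩ := exists_abs_rpow_mul_normalizedJacobi_sub_normalizedBessel_le ha hb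
  obtain ⟨C₂, hC₂, hBessel⟩ := exists_abs_rpow_mul_normalizedBessel_sub_le ha
  refine ⟨C₁ + C₂, add_pos hC₁ hC₂, fun n hN z hz => ?_⟩
  have hJ := hJacobi n hN z hz
  rw [mul_sub] at hJ
  rw [add_div]
  exact (abs_sub_le _ _ _).trans (add_le_add hJ (hBessel z hz.1))

lemma mAB_pos {θ : ℝ} (hθ : θ ∈ Ioc 0 (π / 2)) : 0 < mAB a b θ := by
  obtain ⟨hs, hc⟩ := sin_half_pos_and_cos_half_pos hθ
  rw [mAB]
  positivity

lemma mAB_mul_rpow_mul_normalizedJacobi (ha : -1 < a) {n : ℕ}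
    (hN : 0 < jacobiFrequency a b n) {θ : ℝ} (hθ : θ ∈ Ioc 0 (π / 2)) :
    mAB a b θ * ((jacobiFrequency a b n * θ) ^ (a + 1 / 2)
      * normalizedJacobi a b n (jacobiFrequency a b n * θ)) =
    2 ^ (a + 1 / 2) * Gamma (a + 1) / √π *
      (jacobiFrequency a b n ^ (a + 1 / 2) / (Gamma (a + 1) * jacobiP a b n 1)
        * jacobiP a b n (cos θ)) := by
  obtain ⟨hs, hc⟩ := sin_half_pos_and_cos_half_pos hθ
  have := Gamma_pos_of_pos (show 0 < a + 1 by linarith)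
  have hm : mAB a b θ * (sin (θ / 2) ^ (a + 1 / 2) * cos (θ / 2) ^ (b + 1 / 2)) = 1 / √π := by
    rw [mAB, show -a - 1 / 2 = -(a + 1 / 2) by ring, show -b - 1 / 2 = -(b + 1 / 2) by ring,
      rpow_neg hs.le, rpow_neg hc.le, rpow_neg pi_nonneg, ← sqrt_eq_rpow]
    field_simp
  have hfactor := rpow_mul_liouvilleFactor (a + 1 / 2) (b + 1 / 2) hθ
  rw [normalizedJacobi, jacobiLiouville, mul_div_cancel_left₀ _ hN.ne', mul_rpow hN.le hθ.1.le]
  calc _ = jacobiFrequency a b n ^ (a + 1 / 2) * (mAB a b θ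
          * (θ ^ (a + 1 / 2) * liouvilleFactor (a + 1 / 2) (b + 1 / 2) θ))
          * jacobiP a b n (cos θ) / jacobiP a b n 1 := by ring
    _ = jacobiFrequency a b n ^ (a + 1 / 2) * 2 ^ (a + 1 / 2) * (1 / √π)
          * jacobiP a b n (cos θ) / jacobiP a b n 1 := by
        rw [hfactor, ← hm]
        ring
    _ = _ := by field_simp

lemma exists_abs_jacobiP_cos_sub_le (ha : 1 / 2 < a) (hb : -1 < b) :
    ∃ C, 0 < C ∧ ∀ n : ℕ, 1 ≤ jacobiFrequency a b n →
      ∀ θ ∈ Icc (1 / jacobiFrequency a b n) (π / 2),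
        |jacobiFrequency a b n ^ (a + 1 / 2) / (Gamma (a + 1) * jacobiP a b n 1)
            * jacobiP a b n (cos θ)
          - mAB a b θ * cos (omegaA a (jacobiFrequency a b n * θ))| ≤
        C * mAB a b θ / (jacobiFrequency a b n * θ) := by
  obtain ⟨C, hC, hbound⟩ := exists_abs_rpow_mul_normalizedJacobi_sub_le ha hb
  have := Gamma_pos_of_pos (show 0 < a + 1 by linarith)
  set κ := 2 ^ (a + 1 / 2) * Gamma (a + 1) / √π with hκ_def
  have hκ : 0 < κ := by positivity
  refine ⟨C / κ, by positivity, fun n hN θ hθ => ?_⟩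
  have hN0 : 0 < jacobiFrequency a b n := zero_lt_one.trans_le hN
  have hθ' : θ ∈ Ioc 0 (π / 2) := ⟨(one_div_pos.2 hN0).trans_le hθ.1, hθ.2⟩
  have hm := mAB_pos (a := a) (b := b) hθ'
  have hz := hbound n hN (jacobiFrequency a b n * θ)
    ⟨(div_le_iff₀' hN0).1 hθ.1, mul_le_mul_of_nonneg_left hθ.2 hN0.le⟩
  have hmodel := mAB_mul_rpow_mul_normalizedJacobi (by linarith) hN0 hθ'
  rw [← hκ_def] at hmodel
  refine le_of_mul_le_mul_left ?_ hκ
  calc _ = mAB a b θ * |(jacobiFrequency a b n * θ) ^ (a + 1 / 2)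
          * normalizedJacobi a b n (jacobiFrequency a b n * θ)
          - κ * cos (omegaA a (jacobiFrequency a b n * θ))| := by
        rw [← abs_of_pos hκ, ← abs_mul, abs_of_pos hκ, ← abs_of_pos hm, ← abs_mul, abs_of_pos hm,
          mul_sub κ, mul_sub, hmodel]
        ring_nf
    _ ≤ mAB a b θ * (C / (jacobiFrequency a b n * θ)) := mul_le_mul_of_nonneg_left hz hm.le
    _ = _ := by field_simp

end Comparison

/-! ### The Dirichlet kernel -/

section DirichletKernel

open Filter Asymptotics

variable {α β : ℝ}

/-- The ratio of the Gamma factors of `v_L^{(α,β)}(1,·)` to their common power of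
`L̃ = L + (α + β + 2) / 2`; it tends to `1` as `L → ∞`. -/
noncomputable def kernelGammaRatio (α β : ℝ) (L : ℕ) : ℝ :=
  Gamma (L + (α + β + 2)) / (Gamma (L + (β + 1)) * jacobiFrequency (α + 1) β L ^ (α + 1)) *
    (Gamma (L + (α + 2)) / (Gamma (L + 1) * jacobiFrequency (α + 1) β L ^ (α + 1)))

lemma exists_abs_kernelGammaRatio_sub_one_le (α β : ℝ) :
    ∃ C, 0 < C ∧ ∀ L : ℕ, 1 ≤ L → |kernelGammaRatio α β L - 1| ≤ C / L := by
  have hleft := isBigO_Gamma_div_Gamma_sub_one (α + β + 2) (β + 1) ((α + β + 2) / 2)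
  have hright := isBigO_Gamma_div_Gamma_sub_one (α + 2) 1 ((α + β + 2) / 2)
  rw [show α + β + 2 - (β + 1) = α + 1 by ring] at hleft
  rw [show α + 2 - 1 = α + 1 by ring] at hright
  obtain ⟨C, hC, hbound⟩ := exists_abs_natCast_le_of_isBigO_inv
    (isBigO_mul_sub_one isBigO_inv_one hleft hright)
  refine ⟨C, hC, fun L hL => ?_⟩
  rw [kernelGammaRatio, jacobiFrequency, show α + 1 + β + 1 = α + β + 2 by ring]
  exact hbound L hL

lemma dirichletJ_one_left_eq_kernelGammaRatio_mul (hα : -1 < α) (hβ : -1 < β)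
    (hαβ : α + β + 1 ≠ 0) {L : ℕ} (hN : 0 < jacobiFrequency (α + 1) β L) (x : ℝ) :
    dirichletJ α β L 1 x =
      2 ^ (-(α + β + 1)) / Gamma (α + 1) * jacobiFrequency (α + 1) β L ^ (α + 1 / 2) *
        (kernelGammaRatio α β L *
          (jacobiFrequency (α + 1) β L ^ (α + 1 + 1 / 2) /
            (Gamma (α + 1 + 1) * jacobiP (α + 1) β L 1) * jacobiP (α + 1) β L x)) := by
  have : (0 : ℝ) ≤ L := L.cast_nonneg
  have := Gamma_pos_of_pos (show 0 < L + (α + 2) by linarith)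
  have := Gamma_pos_of_pos (show 0 < L + (β + 1) by linarith)
  have := Gamma_pos_of_pos (show 0 < α + 1 by linarith)
  have := Gamma_pos_of_pos (show 0 < α + 1 + 1 by linarith)
  have := Gamma_pos_of_pos (show (0 : ℝ) < L + 1 by positivity)
  have hpower : jacobiFrequency (α + 1) β L ^ (α + 1 / 2)
      * jacobiFrequency (α + 1) β L ^ (α + 1 + 1 / 2)
      = jacobiFrequency (α + 1) β L ^ (α + 1) * jacobiFrequency (α + 1) β L ^ (α + 1) := by
    rw [← rpow_add hN, ← rpow_add hN]
    ring_nf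
  rw [dirichletJ_one_left hα hβ hαβ, jacobiP_one_right hβ, kernelGammaRatio,
    ← Gamma_nat_eq_factorial, show (L : ℝ) + α + β + 2 = L + (α + β + 2) by ring,
    show (L : ℝ) + β + 1 = L + (β + 1) by ring, show (L : ℝ) + (α + 1) + 1 = L + (α + 2) by ring]
  have := rpow_pos_of_pos hN (α + 1)
  generalize jacobiFrequency (α + 1) β L ^ (α + 1 / 2) = u at hpower ⊢
  generalize jacobiFrequency (α + 1) β L ^ (α + 1 + 1 / 2) = v at hpower ⊢
  field_simp
  linear_combination -Gamma (L + (α + β + 2)) * jacobiP (α + 1) β L x * hpower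

lemma abs_mul_sub_le_of_abs_sub_le {ρ q c δ ε m : ℝ} (hρ : |ρ - 1| ≤ δ) (hq : |q - c| ≤ ε)
    (hc : |c| ≤ m) : |ρ * q - c| ≤ δ * (ε + m) + ε := by
  have hq' : |q| ≤ ε + m := by
    linarith [abs_sub_abs_le_abs_sub q c]
  calc |ρ * q - c| = |(ρ - 1) * q + (q - c)| := by ring_nf
    _ ≤ |ρ - 1| * |q| + |q - c| := (abs_add_le _ _).trans_eq (by rw [abs_mul])
    _ ≤ δ * (ε + m) + ε := by
      gcongr
      exact (abs_nonneg _).trans hρ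

lemma exists_abs_kernelGammaRatio_mul_sub_le (hα : -(1 / 2) < α) (hβ : -1 < β) :
    ∃ C, 0 < C ∧ ∀ L : ℕ, 1 ≤ L → ∀ θ : ℝ, 1 / (L : ℝ) ≤ θ → θ ≤ π / 2 →
      |kernelGammaRatio α β L *
          (jacobiFrequency (α + 1) β L ^ (α + 1 + 1 / 2) /
            (Gamma (α + 1 + 1) * jacobiP (α + 1) β L 1) * jacobiP (α + 1) β L (cos θ))
        - mAB (α + 1) β θ * cos (omegaA (α + 1) (jacobiFrequency (α + 1) β L * θ))| ≤
        C * mAB (α + 1) β θ * (sin θ)⁻¹ * (L : ℝ)⁻¹ := by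
  obtain ⟨E, hE, hJacobi⟩ := exists_abs_jacobiP_cos_sub_le (a := α + 1) (by linarith) hβ
  obtain ⟨D, hD, hGamma⟩ := exists_abs_kernelGammaRatio_sub_one_le α β
  refine ⟨D * (E + 1) + E, by positivity, fun L hL θ hθL hθ => ?_⟩
  have hL1 : (1 : ℝ) ≤ L := Nat.one_le_cast.2 hL
  have hLN : (L : ℝ) ≤ jacobiFrequency (α + 1) β L := by
    rw [jacobiFrequency]
    linarith
  set N := jacobiFrequency (α + 1) β L
  have hN0 : 0 < N := by linarith
  have hθ0 : 0 < θ := lt_of_lt_of_le (by positivity) hθL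
  have hNθ : 1 / N ≤ θ := (one_div_le_one_div_of_le (by positivity) hLN).trans hθL
  have hsin : 0 < sin θ := sin_pos_of_pos_of_lt_pi hθ0 (by linarith [pi_pos])
  set m := mAB (α + 1) β θ
  have hm : 0 < m := mAB_pos ⟨hθ0, hθ⟩
  have hcos : |m * cos (omegaA (α + 1) (N * θ))| ≤ m := by
    rw [abs_mul, abs_of_pos hm]
    exact mul_le_of_le_one_right hm.le (abs_cos_le_one _)
  have hbound := abs_mul_sub_le_of_abs_sub_le (hGamma L hL)
    (hJacobi L (hL1.trans hLN) θ ⟨hNθ, hθ⟩) hcos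
  have hone : E * m / (N * θ) ≤ E * m :=
    div_le_self (by positivity) ((div_le_iff₀' hN0).1 hNθ)
  have hdecay : E * m / (N * θ) ≤ E * m / (L * sin θ) := by
    gcongr
    exact sin_le hθ0.le
  have hgamma : D / L ≤ D / (L * sin θ) := by
    gcongr
    exact mul_le_of_le_one_right (by positivity) (sin_le_one θ)
  calc _ ≤ D / L * (E * m / (N * θ) + m) + E * m / (N * θ) := hbound
    _ ≤ D / (L * sin θ) * (E * m + m) + E * m / (L * sin θ) := by gcongr
    _ = _ := by field_simp

end DirichletKernel

theorem dirichletJ_one_term_asymptotics_left_general (α β : ℝ) (hα : -(1 / 2 : ℝ) < α)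
    (hβ : -1 < β) (hαβ : α + β + 1 ≠ 0) :
    ∃ C : ℝ, 0 < C ∧
      ∀ L : ℕ, 1 ≤ L → ∀ θ : ℝ, 1 / (L : ℝ) ≤ θ → θ ≤ π / 2 →
        |dirichletJ α β L 1 (cos θ) -
            (2 : ℝ) ^ (-(α + β + 1)) / Gamma (α + 1) *
              ((L : ℝ) + (α + β + 2) / 2) ^ (α + 1 / 2) * mAB (α + 1) β θ *
                cos (omegaA (α + 1) (((L : ℝ) + (α + β + 2) / 2) * θ))| ≤
          C * ((2 : ℝ) ^ (-(α + β + 1)) / Gamma (α + 1)) *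
            ((L : ℝ) + (α + β + 2) / 2) ^ (α + 1 / 2) * mAB (α + 1) β θ *
              (sin θ)⁻¹ * (L : ℝ)⁻¹ := by
  obtain ⟨C, hC, hbound⟩ := exists_abs_kernelGammaRatio_mul_sub_le hα hβ
  refine ⟨C, hC, fun L hL θ hθL hθ => ?_⟩
  have hN_eq : (L : ℝ) + (α + β + 2) / 2 = jacobiFrequency (α + 1) β L := by
    rw [jacobiFrequency]
    ring
  have hN : 0 < jacobiFrequency (α + 1) β L := by
    rw [← hN_eq]
    linarith [(Nat.one_le_cast (α := ℝ)).2 hL]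
  have hΓ : 0 < Gamma (α + 1) := Gamma_pos_of_pos (by linarith)
  rw [hN_eq, dirichletJ_one_left_eq_kernelGammaRatio_mul (by linarith) hβ hαβ hN,
    mul_assoc (_ * _) (mAB _ _ _), ← mul_sub, abs_mul, abs_of_pos (by positivity)]
  exact (mul_le_mul_of_nonneg_left (hbound L hL θ hθL hθ) (by positivity)).trans_eq (by ring)

/-- Lemma 2.4 i): one-term asymptotics of the generalised Dirichlet kernel
`v_L^{(α,β)}(1,cos θ)` for `c⁽¹⁾/L ≤ θ ≤ π/2`, with `L̃ = L + (α+β+2)/2`. -/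
theorem dirichletJ_one_term_asymptotics_left (α β : ℝ)
    (hα : -(1 / 2 : ℝ) < α) (hβ : -(1 / 2 : ℝ) < β) :
    ∃ c : ℝ, 0 < c ∧ ∃ C : ℝ, 0 < C ∧
      ∀ L : ℕ, 1 ≤ L → ∀ θ : ℝ, c / (L : ℝ) ≤ θ → θ ≤ Real.pi / 2 →
        |dirichletJ α β L 1 (Real.cos θ) -
            (2 : ℝ) ^ (-(α + β + 1)) / Real.Gamma (α + 1) *
              ((L : ℝ) + (α + β + 2) / 2) ^ (α + 1 / 2) * mAB (α + 1) β θ *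
                Real.cos (omegaA (α + 1) (((L : ℝ) + (α + β + 2) / 2) * θ))| ≤
          C * ((2 : ℝ) ^ (-(α + β + 1)) / Real.Gamma (α + 1)) *
            ((L : ℝ) + (α + β + 2) / 2) ^ (α + 1 / 2) * mAB (α + 1) β θ *
              (Real.sin θ)⁻¹ * (L : ℝ)⁻¹ := by
  obtain ⟨C, hC, hbound⟩ :=
    dirichletJ_one_term_asymptotics_left_general α β hα (by linarith) (by linarith)
  exact ⟨1, one_pos, C, hC, hbound⟩
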